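/- arXiv:1608.06596 — 2 statements merged into one kernel-verified Lean document; each statement's English description precedes it below -/
import Mathlib

section
/- For n qudits of prime dimension p and every w ≥ 1, the group D_w is contained in the set C^w_d of diagonal gates in the w-th level of the Clifford hierarchy. -/
/-!
The idea is that of non-classical polynomials. Write a diagonal gate as `exp(2πi f)` with a phase
function `f : (ℤ/p)^n → ℝ` read modulo `1`, and give `∏ C(x_i, a_i) / p^m` the degree
`(p-1)(m-1) + wt(a)`, where `x_i` denotes the representative in `{0, …, p-1}`. Then `phaseFn p n w`
is the group of phase functions of degree at most `w`.

Taking a difference `f(x + h) - f(x)` lowers the degree (`diff_mem`). For a basis vector this is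
Pascal's rule, except when `x_i = p - 1` wraps around to `0`. The correction is
`C(p, a_i) C(x_i, p-1)`, since `C(x_i, p-1)` is the indicator of `x_i = p - 1`, and divisibility of
`C(p, a_i)` by `p` lowers `m` by one, which compensates for the exponent `p - 1`
(`choose_val_add_one`, `binomFn_diff_mem`).

Conjugating the Pauli `exp(2πi g) X^w`, with `g` of degree `1`, by `U = exp(2πi f) X^v` gives
`exp(2πi (g(x - v) - (f(x - w) - f(x)))) X^w` (`gate_conj`), so by induction on `k` the gate `U`
lies in level `k` when `f` has degree at most `k ≥ 1` (`gate_mem_cliffN`). In degree `1` the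
generators are constants and `x_i / p`, so the diagonal gate is a Pauli up to a phase.

Monomials are integer combinations of binomial products of at most the same degree
(`monomial_mem`), and the recursion defining `D_{m,a}` never increases the weight
(`DgrpN_subset`). Hence `D_w` consists of gates `exp(2πi f)` with `f` of degree at most `w`.
-/

open Matrix Complex

/-- Shift gate `X` acting on the `i`-th of `n` qudits: `X(e_i)|j⟩ = |j + e_i⟩`. -/
noncomputable def XmatN (p n : ℕ) [NeZero p] (i : Fin n) :
    Matrix (Fin n → ZMod p) (Fin n → ZMod p) ℂ :=
  Matrix.of fun r c => if r = Function.update c i (c i + 1) then 1 else 0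

/-- Phase gate `Z` acting on the `i`-th of `n` qudits: `Z(e_i)|j⟩ = ω^{j_i}|j⟩`. -/
noncomputable def ZmatN (p n : ℕ) [NeZero p] (i : Fin n) :
    Matrix (Fin n → ZMod p) (Fin n → ZMod p) ℂ :=
  Matrix.of fun r c =>
    if r = c then Complex.exp (2 * Real.pi * Complex.I * (((c i).val : ℂ) / (p : ℂ))) else 0

/-- The phase of the Pauli group generators: `i` if `p = 2`, `ω = exp(2πi/p)` if `p > 2`. -/
noncomputable def pauliPhase (p : ℕ) : ℂ :=
  if p = 2 then Complex.I else Complex.exp (2 * Real.pi * Complex.I / (p : ℂ))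

/-- The `n`-qudit Pauli group `P_n = P^{⊗n}`, generated by the phase `iI` (`p = 2`) or
`ωI` (`p > 2`) together with `X` and `Z` acting on each qudit.  All generators have
finite order, so the monoid they generate is already a group. -/
noncomputable def PauliN (p n : ℕ) [NeZero p] :
    Set (Matrix (Fin n → ZMod p) (Fin n → ZMod p) ℂ) :=
  ↑(Submonoid.closure
      ({pauliPhase p • (1 : Matrix (Fin n → ZMod p) (Fin n → ZMod p) ℂ)} ∪
        (Set.range (XmatN p n)) ∪ (Set.range (ZmatN p n))))

/-- The Clifford hierarchy on `n` qudits: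
`C^1 = {e^{iφ} P : P ∈ P_n}`, and `C^k = {U unitary | U P U† ∈ C^{k-1} ∀ P ∈ P_n}` for `k ≥ 2`. -/
noncomputable def CliffN (p n : ℕ) [NeZero p] :
    ℕ → Set (Matrix (Fin n → ZMod p) (Fin n → ZMod p) ℂ)
  | 0 => ∅
  | 1 => {U | ∃ φ : ℝ, ∃ P ∈ PauliN p n, U = Complex.exp (φ * Complex.I) • P}
  | (k + 2) => {U | U ∈ Matrix.unitaryGroup (Fin n → ZMod p) ℂ ∧
      ∀ P ∈ PauliN p n, U * P * Uᴴ ∈ CliffN p n (k + 1)}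

/-- The diagonal gates in the `k`-th level of the `n`-qudit Clifford hierarchy. -/
noncomputable def CliffDN (p n : ℕ) [NeZero p] (k : ℕ) :
    Set (Matrix (Fin n → ZMod p) (Fin n → ZMod p) ℂ) :=
  {U | U ∈ CliffN p n k ∧ U.IsDiag}

/-- The gate `U_{m,a} = Σ_j exp(2πi j_1^{a_1}⋯j_n^{a_n} / p^m)|j⟩⟨j|`, powers computed
with the integer representatives `0 ≤ j_i ≤ p-1`. -/
noncomputable def UmaN (p n : ℕ) [NeZero p] (m : ℕ) (a : Fin n → ℕ) :
    Matrix (Fin n → ZMod p) (Fin n → ZMod p) ℂ :=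
  Matrix.of fun r c =>
    if r = c then
      Complex.exp (2 * Real.pi * Complex.I * ((∏ i, ((r i).val : ℂ) ^ (a i)) / (p : ℂ) ^ m))
    else 0

/-- The group `D_{m,a} = ⟨U_{m,a}⟩ ⬝ {e^{iφ}I} ⬝ ∏_b D_{m,b} ⬝ ∏_c D_{m-1,c}`, where `b`
ranges over vectors with `b_i ≤ a_i` for all `i` and `wt(b) < wt(a)`, and `c` ranges over
vectors with `1 ≤ c_i ≤ p-1` and `wt(c) ≤ wt(a) + (p-1)`; `D_{0,·} = {e^{iφ}I}`.
The products of these commuting groups of diagonal gates are expressed as the monoids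
they generate (all factors are groups, so these products are groups). -/
noncomputable def DgrpN (p n : ℕ) [NeZero p] :
    ℕ → (Fin n → ℕ) → Set (Matrix (Fin n → ZMod p) (Fin n → ZMod p) ℂ)
  | 0, _ => {U | ∃ φ : ℝ, U = Complex.exp (φ * Complex.I) • 1}
  | (m + 1), a =>
    {W | ∃ G ∈ Submonoid.closure {UmaN p n (m + 1) a},
      ∃ φ : ℝ,
      ∃ D ∈ Submonoid.closure
          (⋃ b ∈ {b : Fin n → ℕ | (∀ i, b i ≤ a i) ∧ ∑ i, b i < ∑ i, a i},
            DgrpN p n (m + 1) b),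
      ∃ E ∈ Submonoid.closure
          (⋃ c ∈ {c : Fin n → ℕ | (∀ i, 1 ≤ c i ∧ c i ≤ p - 1) ∧
              ∑ i, c i ≤ (∑ i, a i) + (p - 1)},
            DgrpN p n m c),
      W = Complex.exp (φ * Complex.I) • (G * D * E)}
  termination_by m a => (m, ∑ i, a i)
  decreasing_by
  · rename_i hb
    exact Prod.Lex.right _ hb.2
  · exact Prod.Lex.left _ _ (Nat.lt_succ_self m)

/-- The index set `S_w = {(m,a) : m ≥ 1, 0 ≤ a_i ≤ p-1, (p-1)(m-1) + wt(a) = w}`. -/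
def Sw (p n w : ℕ) : Set (ℕ × (Fin n → ℕ)) :=
  {x | 1 ≤ x.1 ∧ (∀ i, x.2 i ≤ p - 1) ∧ (p - 1) * (x.1 - 1) + ∑ i, x.2 i = w}

/-- The group `D_w = ∏_{(m,a) ∈ S_w} D_{m,a}`, expressed as the monoid generated by the
union of the (commuting) groups `D_{m,a}`. -/
noncomputable def Dw (p n : ℕ) [NeZero p] (w : ℕ) :
    Set (Matrix (Fin n → ZMod p) (Fin n → ZMod p) ℂ) :=
  ↑(Submonoid.closure (⋃ x ∈ Sw p n w, DgrpN p n x.1 x.2))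

/-! ### Phase functions and their degree -/

/-- The integer-valued function `∏_i C(x_i, a_i)`, divided by `p^m`, where `x_i` stands for the
representative in `{0, …, p-1}`. -/
noncomputable def binomFn (p n m : ℕ) (a : Fin n → ℕ) : (Fin n → ZMod p) → ℝ :=
  fun x => (∏ i, ((x i).val.choose (a i) : ℝ)) / (p : ℝ) ^ m

/-- Phase functions of degree at most `w` (to be read modulo `1`): the group generated by the
constants, the integer-valued functions, and the functions `∏_i C(x_i, a_i) / p^m` with
`(p-1)(m-1) + wt(a) ≤ w`. The weight bound is written without subtracting from `m`, and no bound
on the `a_i` is needed because `C(x_i, a_i) = 0` for `a_i ≥ p`. -/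
noncomputable def phaseFn (p n w : ℕ) : AddSubgroup ((Fin n → ZMod p) → ℝ) :=
  AddSubgroup.closure
    ({f | ∃ c : ℝ, f = fun _ => c} ∪ {f | ∃ k : (Fin n → ZMod p) → ℤ, f = fun x => (k x : ℝ)} ∪
      {f | ∃ m a, (p - 1) * m + ∑ i, a i ≤ w + (p - 1) ∧ f = binomFn p n m a})

section PhaseFunctions

variable {p n : ℕ}

lemma const_mem (w : ℕ) (c : ℝ) : (fun _ => c) ∈ phaseFn p n w :=
  AddSubgroup.subset_closure (Or.inl (Or.inl ⟨c, rfl⟩))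

lemma int_mem (w : ℕ) (k : (Fin n → ZMod p) → ℤ) : (fun x => (k x : ℝ)) ∈ phaseFn p n w :=
  AddSubgroup.subset_closure (Or.inl (Or.inr ⟨k, rfl⟩))

lemma binomFn_mem {w m : ℕ} {a : Fin n → ℕ} (h : (p - 1) * m + ∑ i, a i ≤ w + (p - 1)) :
    binomFn p n m a ∈ phaseFn p n w :=
  AddSubgroup.subset_closure (Or.inr ⟨m, a, h, rfl⟩)

lemma phaseFn_mono {w w' : ℕ} (h : w ≤ w') : phaseFn p n w ≤ phaseFn p n w' := by
  refine AddSubgroup.closure_mono (Set.union_subset_union_right _ ?_)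
  rintro f ⟨m, a, hm, rfl⟩
  exact ⟨m, a, by omega, rfl⟩

lemma binomFn_zero_mem (w : ℕ) (a : Fin n → ℕ) : binomFn p n 0 a ∈ phaseFn p n w := by
  have := int_mem (p := p) (n := n) w (fun x => ∏ i, ((x i).val.choose (a i) : ℤ))
  convert this using 2 with x
  simp [binomFn]

lemma sum_update_add (a : Fin n → ℕ) (i : Fin n) (k : ℕ) :
    ∑ j, Function.update a i k j + a i = ∑ j, a j + k := by
  rw [← Finset.add_sum_erase _ _ (Finset.mem_univ i), ← Finset.add_sum_erase _ a (Finset.mem_univ i)]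
  have : ∑ j ∈ Finset.univ.erase i, Function.update a i k j = ∑ j ∈ Finset.univ.erase i, a j :=
    Finset.sum_congr rfl fun j hj => Function.update_of_ne (Finset.ne_of_mem_erase hj) _ _
  rw [this, Function.update_self]
  ring

/-- Isolates the `i`-th factor of `binomFn`. -/
lemma binomFn_update (m : ℕ) (a : Fin n → ℕ) (i : Fin n) (k : ℕ) (x : Fin n → ZMod p) :
    binomFn p n m (Function.update a i k) x =
      (x i).val.choose k * (∏ j ∈ Finset.univ.erase i, ((x j).val.choose (a j) : ℝ)) / p ^ m := by
  have : ∏ j ∈ Finset.univ.erase i, ((x j).val.choose (Function.update a i k j) : ℝ)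
      = ∏ j ∈ Finset.univ.erase i, ((x j).val.choose (a j) : ℝ) :=
    Finset.prod_congr rfl fun j hj => by
      rw [Function.update_of_ne (Finset.ne_of_mem_erase hj)]
  rw [binomFn, ← Finset.mul_prod_erase _ _ (Finset.mem_univ i), this, Function.update_self]

/-- Pascal's rule on representatives modulo `p`. The correction term is supported on `z = p - 1`,
whose indicator function is `C(z, p-1)`. -/
lemma choose_val_add_one [NeZero p] (z : ZMod p) (k : ℕ) :
    ((z + 1).val.choose (k + 1) : ℝ) =
      z.val.choose (k + 1) + z.val.choose k - p.choose (k + 1) * z.val.choose (p - 1) := by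
  obtain ⟨q, rfl⟩ : ∃ q, p = q + 1 := ⟨p - 1, by have := NeZero.pos p; omega⟩
  have hz : z.val < q + 1 := ZMod.val_lt z
  have hv : (z + 1).val = (z.val + 1) % (q + 1) := by
    rcases Nat.eq_zero_or_pos q with rfl | hq
    · have := ZMod.val_lt (z + 1); omega
    · rw [ZMod.val_add, ZMod.val_one'' (by omega)]
  rcases Nat.lt_or_ge z.val q with h | h
  · rw [hv, Nat.mod_eq_of_lt (by omega), Nat.add_sub_cancel, Nat.choose_eq_zero_of_lt h,
      Nat.choose_succ_succ]
    push_cast; ring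
  · have h' : z.val = q := by omega
    rw [hv, h', Nat.mod_self, Nat.add_sub_cancel, Nat.choose_self, Nat.choose_succ_succ q]
    simp; ring

/-- The difference of a generator of degree `w + 1` along a basis vector has degree `w`: the
correction term of `choose_val_add_one` carries a factor `C(p, a_i)`, divisible by `p`, so raising
the exponent to `p - 1` is paid for by lowering `m` by one. -/
lemma binomFn_diff_mem [NeZero p] (hp : p.Prime) {w m : ℕ} {a : Fin n → ℕ}
    (h : (p - 1) * m + ∑ i, a i ≤ w + 1 + (p - 1)) (i : Fin n) :
    (fun x => binomFn p n m a (x + Pi.single i 1) - binomFn p n m a x) ∈ phaseFn p n w := by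
  have hpr : ∀ x : Fin n → ZMod p, ∏ j ∈ Finset.univ.erase i,
      (((x + Pi.single i 1 : Fin n → ZMod p) j).val.choose (a j) : ℝ)
        = ∏ j ∈ Finset.univ.erase i, ((x j).val.choose (a j) : ℝ) := fun x =>
    Finset.prod_congr rfl fun j hj => by simp [Finset.ne_of_mem_erase hj]
  have hB : ∀ x, binomFn p n m a x = (x i).val.choose (a i) *
      (∏ j ∈ Finset.univ.erase i, ((x j).val.choose (a j) : ℝ)) / p ^ m := fun x => by
    rw [← binomFn_update, Function.update_eq_self]
  rcases m with _ | m
  · have := int_mem (p := p) (n := n) w (fun x =>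
      ∏ j, (((x + Pi.single i 1 : Fin n → ZMod p) j).val.choose (a j) : ℤ) -
        ∏ j, ((x j).val.choose (a j) : ℤ))
    convert this using 2 with x
    simp [binomFn]
  obtain hk | ⟨k, hk⟩ : a i = 0 ∨ ∃ k, a i = k + 1 := by
    rcases a i with _ | k
    · exact Or.inl rfl
    · exact Or.inr ⟨k, rfl⟩
  · convert const_mem (p := p) (n := n) w 0 using 2 with x
    rw [hB, hB, hpr, hk]; simp
  rcases Nat.lt_or_ge (a i) p with hlt | hge
  swap
  · convert const_mem (p := p) (n := n) w 0 using 2 with x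
    rw [hB, hB, Nat.choose_eq_zero_of_lt ((ZMod.val_lt _).trans_le hge),
      Nat.choose_eq_zero_of_lt ((ZMod.val_lt _).trans_le hge)]
    simp
  obtain ⟨q, hq⟩ := hp.dvd_choose_self (by omega : a i ≠ 0) hlt
  have h1 : binomFn p n (m + 1) (Function.update a i k) ∈ phaseFn p n w := by
    apply binomFn_mem
    have := sum_update_add a i k
    omega
  have h2 : binomFn p n m (Function.update a i (p - 1)) ∈ phaseFn p n w := by
    apply binomFn_mem
    have := sum_update_add a i (p - 1)
    rw [Nat.mul_succ] at h
    omega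
  convert sub_mem h1 (nsmul_mem h2 q) using 1
  funext x
  have hp0 : (p : ℝ) ≠ 0 := by exact_mod_cast hp.ne_zero
  have hq' : (p.choose (k + 1) : ℝ) = p * q := by rw [← hk, hq]; push_cast; rfl
  rw [Pi.sub_apply, Pi.smul_apply, binomFn_update, binomFn_update, hB, hB, hpr, hk, Pi.add_apply,
    Pi.single_eq_same, choose_val_add_one, hq', nsmul_eq_mul, pow_succ]
  field_simp
  ring

lemma diff_single_mem [NeZero p] (hp : p.Prime) {w : ℕ} {f : (Fin n → ZMod p) → ℝ}
    (hf : f ∈ phaseFn p n (w + 1)) (i : Fin n) :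
    (fun x => f (x + Pi.single i 1) - f x) ∈ phaseFn p n w := by
  induction hf using AddSubgroup.closure_induction with
  | mem f hf =>
    rcases hf with (⟨c, rfl⟩ | ⟨k, rfl⟩) | ⟨m, a, h, rfl⟩
    · simpa using const_mem w 0
    · simpa using int_mem w (fun x => k (x + Pi.single i 1) - k x)
    · exact binomFn_diff_mem hp h i
  | zero => simpa using const_mem w 0
  | add f g _ _ hf hg =>
    convert add_mem hf hg using 1
    funext x; simp only [Pi.add_apply]; ring
  | neg f _ hf =>
    convert neg_mem hf using 1
    funext x; simp only [Pi.neg_apply]; ring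

lemma eq_sum_val_smul_single [NeZero p] (h : Fin n → ZMod p) :
    h = ∑ i, (h i).val • (Pi.single i 1 : Fin n → ZMod p) := by
  conv_lhs => rw [← Finset.univ_sum_single h]
  refine Finset.sum_congr rfl fun i _ => ?_
  rw [← Pi.single_smul, nsmul_eq_mul, mul_one, ZMod.natCast_zmod_val]

/-- Differences along arbitrary vectors lower the degree. -/
lemma diff_mem [NeZero p] (hp : p.Prime) {w : ℕ} (h : Fin n → ZMod p) :
    ∀ f ∈ phaseFn p n (w + 1), (fun x => f (x + h) - f x) ∈ phaseFn p n w := by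
  let H : AddSubmonoid (Fin n → ZMod p) :=
    { carrier := {h | ∀ f ∈ phaseFn p n (w + 1), (fun x => f (x + h) - f x) ∈ phaseFn p n w}
      zero_mem' := fun f _ => by simpa using const_mem w 0
      add_mem' := by
        intro h k hh hk f hf
        have h1 := hh f hf
        have h2 : (fun x => f (x + h)) ∈ phaseFn p n (w + 1) := by
          convert add_mem (phaseFn_mono (Nat.le_succ w) h1) hf using 1
          funext x; simp
        convert add_mem (hk _ h2) h1 using 1
        funext x
        simp only [Pi.add_apply, add_assoc, add_comm h k]
        ring }
  have key : h ∈ H := by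
    rw [eq_sum_val_smul_single h]
    refine sum_mem fun i _ => nsmul_mem ?_ _
    exact fun f hf => diff_single_mem hp hf i
  exact key

lemma shift_mem [NeZero p] (hp : p.Prime) {w : ℕ} (h : Fin n → ZMod p)
    {f : (Fin n → ZMod p) → ℝ} (hf : f ∈ phaseFn p n w) : (fun x => f (x + h)) ∈ phaseFn p n w := by
  convert add_mem (diff_mem hp h f (phaseFn_mono (Nat.le_succ w) hf)) hf using 1
  funext x; simp

/-- Multiplication by a coordinate raises the degree by at most one, since
`z C(z, k) = k C(z, k) + (k + 1) C(z, k + 1)`. -/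
lemma coord_mul_mem {w : ℕ} (i : Fin n) {m : ℕ} {f : (Fin n → ZMod p) → ℝ}
    (hf : f ∈ AddSubgroup.closure
      {f | ∃ a, ∑ i, a i ≤ w ∧ f = binomFn p n m a}) :
    (fun x => ((x i).val : ℝ) * f x) ∈ AddSubgroup.closure
      {f | ∃ a, ∑ i, a i ≤ w + 1 ∧ f = binomFn p n m a} := by
  induction hf using AddSubgroup.closure_induction with
  | mem f hf =>
    obtain ⟨a, h, rfl⟩ := hf
    have h1 : binomFn p n m (Function.update a i (a i)) ∈ AddSubgroup.closure
      {f | ∃ a, ∑ i, a i ≤ w + 1 ∧ f = binomFn p n m a} :=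
      AddSubgroup.subset_closure ⟨_, by rw [Function.update_eq_self]; omega, rfl⟩
    have h2 : binomFn p n m (Function.update a i (a i + 1)) ∈ AddSubgroup.closure
      {f | ∃ a, ∑ i, a i ≤ w + 1 ∧ f = binomFn p n m a} :=
      AddSubgroup.subset_closure ⟨_, by have := sum_update_add a i (a i + 1); omega, rfl⟩
    convert add_mem (nsmul_mem h1 (a i)) (nsmul_mem h2 (a i + 1)) using 1
    funext x
    have hc : ((x i).val : ℝ) * (x i).val.choose (a i) =
        a i * (x i).val.choose (a i) + (a i + 1) * (x i).val.choose (a i + 1) := by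
      have h3 := Nat.choose_succ_right_eq (x i).val (a i)
      rcases Nat.lt_or_ge (x i).val (a i) with hl | hl
      · rw [Nat.choose_eq_zero_of_lt hl, Nat.choose_eq_zero_of_lt (by omega)]; simp
      · have h4 : ((x i).val.choose (a i + 1) : ℝ) * (a i + 1) =
            (x i).val.choose (a i) * ((x i).val - a i) := by
          rw [← Nat.cast_sub hl]; exact_mod_cast h3
        linarith
    rw [Pi.add_apply, Pi.smul_apply, Pi.smul_apply, binomFn_update, binomFn_update,
      nsmul_eq_mul, nsmul_eq_mul]
    conv_lhs => rw [← Function.update_eq_self i a, binomFn_update]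
    rw [← mul_div_assoc, ← mul_assoc, hc]
    push_cast
    ring
  | zero => simp only [Pi.zero_apply, mul_zero]; exact AddSubgroup.zero_mem _
  | add f g _ _ hf hg =>
    convert add_mem hf hg using 1
    funext x; simp only [Pi.add_apply]; ring
  | neg f _ hf =>
    convert neg_mem hf using 1
    funext x; simp only [Pi.neg_apply]; ring

/-- Monomials are integer combinations of binomial products of no larger degree. -/
lemma monomial_mem_closure (m : ℕ) {s : ℕ} (a : Fin n → ℕ) (hs : ∑ i, a i = s) :
    (fun x : Fin n → ZMod p => (∏ i, ((x i).val : ℝ) ^ a i) / (p : ℝ) ^ m) ∈ AddSubgroup.closure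
      {f | ∃ a, ∑ i, a i ≤ s ∧ f = binomFn p n m a} := by
  induction s generalizing a with
  | zero =>
    refine AddSubgroup.subset_closure ⟨0, by simp, ?_⟩
    have ha : ∀ i, a i = 0 := by simpa using hs
    funext x; simp [binomFn, ha]
  | succ s ih =>
    obtain ⟨i, hi⟩ : ∃ i, a i ≠ 0 := by
      by_contra! hc
      simp [hc] at hs
    obtain ⟨k, hk⟩ := Nat.exists_eq_succ_of_ne_zero hi
    have hsum := sum_update_add a i k
    have hprod : ∀ x : Fin n → ZMod p, ∏ j, ((x j).val : ℝ) ^ a j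
        = (x i).val * ∏ j, ((x j).val : ℝ) ^ Function.update a i k j := fun x => by
      rw [← Finset.mul_prod_erase _ _ (Finset.mem_univ i),
        ← Finset.mul_prod_erase (a := i) _ (fun j => ((x j).val : ℝ) ^ Function.update a i k j)
          (Finset.mem_univ i), Function.update_self, hk, Nat.succ_eq_add_one, pow_succ', mul_assoc]
      congr 2
      refine Finset.prod_congr rfl fun j hj => ?_
      rw [Function.update_of_ne (Finset.ne_of_mem_erase hj)]
    simp only [hprod, mul_div_assoc]
    exact coord_mul_mem i (ih (Function.update a i k) (by omega))

lemma monomial_mem {m w : ℕ} (a : Fin n → ℕ) (h : (p - 1) * m + ∑ i, a i ≤ w + (p - 1)) :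
    (fun x : Fin n → ZMod p => (∏ i, ((x i).val : ℝ) ^ a i) / (p : ℝ) ^ m) ∈ phaseFn p n w := by
  refine (AddSubgroup.closure_le _).2 ?_ (monomial_mem_closure m a rfl)
  rintro f ⟨b, hb, rfl⟩
  exact binomFn_mem (by omega)

end PhaseFunctions

/-! ### Diagonal gates times shifts -/

/-- The diagonal gate with phase `exp(2πi f)`. -/
noncomputable def phaseGate (p n : ℕ) (f : (Fin n → ZMod p) → ℝ) :
    Matrix (Fin n → ZMod p) (Fin n → ZMod p) ℂ :=
  Matrix.diagonal fun x => Complex.exp (2 * Real.pi * Complex.I * (f x : ℂ))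

/-- The shift `|j⟩ ↦ |j + v⟩`. -/
noncomputable def shiftGate (p n : ℕ) (v : Fin n → ZMod p) :
    Matrix (Fin n → ZMod p) (Fin n → ZMod p) ℂ :=
  Matrix.of fun r c => if r = c + v then 1 else 0

section Gates

variable {p n : ℕ}

lemma phaseGate_add [NeZero p] (f g : (Fin n → ZMod p) → ℝ) :
    phaseGate p n (f + g) = phaseGate p n f * phaseGate p n g := by
  rw [phaseGate, phaseGate, phaseGate, Matrix.diagonal_mul_diagonal]
  congr 1; funext x
  rw [← Complex.exp_add]; congr 1
  rw [Pi.add_apply]; push_cast; ring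

lemma phaseGate_int (k : (Fin n → ZMod p) → ℤ) : phaseGate p n (fun x => (k x : ℝ)) = 1 := by
  rw [phaseGate, ← Matrix.diagonal_one]
  congr 1; funext x
  rw [Complex.exp_eq_one_iff]
  exact ⟨k x, by push_cast; ring⟩

lemma phaseGate_zero : phaseGate p n 0 = 1 := by
  convert phaseGate_int (p := p) (n := n) (fun _ => 0) using 2; funext x; simp

lemma phaseGate_const (c : ℝ) :
    phaseGate p n (fun _ => c) = Complex.exp ((2 * Real.pi * c : ℝ) * Complex.I) • 1 := by
  rw [phaseGate, Matrix.smul_one_eq_diagonal]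
  congr 1; funext x; congr 1; push_cast; ring

lemma smul_one_eq_phaseGate (φ : ℝ) :
    Complex.exp (φ * Complex.I) • (1 : Matrix (Fin n → ZMod p) (Fin n → ZMod p) ℂ)
      = phaseGate p n (fun _ => φ / (2 * Real.pi)) := by
  rw [phaseGate_const]
  congr 4
  field_simp

lemma phaseGate_conjTranspose (f : (Fin n → ZMod p) → ℝ) :
    (phaseGate p n f)ᴴ = phaseGate p n (-f) := by
  rw [phaseGate, phaseGate, Matrix.diagonal_conjTranspose]
  congr 1; funext x
  rw [Pi.star_apply, Complex.star_def, ← Complex.exp_conj]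
  congr 1
  simp only [map_mul, Complex.conj_ofReal, Complex.conj_I, map_ofNat, Pi.neg_apply,
    Complex.ofReal_neg]
  ring

lemma shiftGate_add [NeZero p] (v w : Fin n → ZMod p) :
    shiftGate p n (v + w) = shiftGate p n v * shiftGate p n w := by
  ext r c
  simp only [shiftGate, Matrix.mul_apply, Matrix.of_apply, mul_ite, mul_one, mul_zero,
    Finset.sum_ite_eq', Finset.mem_univ, if_true]
  rw [show c + (v + w) = c + w + v by abel]

lemma shiftGate_zero : shiftGate p n 0 = 1 := by
  ext r c
  simp [shiftGate, Matrix.one_apply]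

lemma shiftGate_conjTranspose (v : Fin n → ZMod p) :
    (shiftGate p n v)ᴴ = shiftGate p n (-v) := by
  ext r c
  simp only [shiftGate, Matrix.conjTranspose_apply, Matrix.of_apply]
  have : c = r + v ↔ r = c + -v := by
    rw [← sub_eq_add_neg, eq_sub_iff_add_eq, eq_comm]
  simp only [this]
  split_ifs <;> simp

lemma shiftGate_mul_phaseGate [NeZero p] (v : Fin n → ZMod p) (f : (Fin n → ZMod p) → ℝ) :
    shiftGate p n v * phaseGate p n f = phaseGate p n (fun x => f (x + -v)) * shiftGate p n v := by
  ext r c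
  rw [phaseGate, phaseGate, Matrix.mul_diagonal, Matrix.diagonal_mul]
  simp only [shiftGate, Matrix.of_apply]
  split_ifs with h
  · rw [h, add_neg_cancel_right]; ring
  · simp

/-- Products of gates of the form diagonal times shift. -/
lemma gate_mul_gate [NeZero p] (f g : (Fin n → ZMod p) → ℝ) (v w : Fin n → ZMod p) :
    phaseGate p n f * shiftGate p n v * (phaseGate p n g * shiftGate p n w) =
      phaseGate p n (f + fun x => g (x + -v)) * shiftGate p n (v + w) := by
  rw [phaseGate_add, shiftGate_add, Matrix.mul_assoc, ← Matrix.mul_assoc (shiftGate p n v),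
    shiftGate_mul_phaseGate]
  simp only [Matrix.mul_assoc]

lemma gate_conjTranspose [NeZero p] (f : (Fin n → ZMod p) → ℝ) (v : Fin n → ZMod p) :
    (phaseGate p n f * shiftGate p n v)ᴴ =
      phaseGate p n (fun x => -f (x + v)) * shiftGate p n (-v) := by
  rw [Matrix.conjTranspose_mul, phaseGate_conjTranspose, shiftGate_conjTranspose,
    shiftGate_mul_phaseGate, neg_neg]
  rfl

/-- Conjugating `exp(2πi g) X^w` by `exp(2πi f) X^v` leaves `X^w` in place and differentiates `f`
along `-w`. -/
lemma gate_conj [NeZero p] (f g : (Fin n → ZMod p) → ℝ) (v w : Fin n → ZMod p) :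
    phaseGate p n f * shiftGate p n v * (phaseGate p n g * shiftGate p n w) *
        (phaseGate p n f * shiftGate p n v)ᴴ =
      phaseGate p n ((fun x => g (x + -v)) - fun x => f (x + -w) - f x) * shiftGate p n w := by
  rw [gate_conjTranspose, gate_mul_gate, gate_mul_gate]
  congr 2
  · funext x
    simp only [Pi.add_apply, Pi.sub_apply]
    rw [show x + -(v + w) + v = x + -w by abel]
    ring
  · abel

lemma gate_mem_unitary [NeZero p] (f : (Fin n → ZMod p) → ℝ) (v : Fin n → ZMod p) :
    phaseGate p n f * shiftGate p n v ∈ Matrix.unitaryGroup (Fin n → ZMod p) ℂ := by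
  rw [Matrix.mem_unitaryGroup_iff, Matrix.star_eq_conjTranspose]
  have h := gate_conj f 0 v 0
  rw [phaseGate_zero, shiftGate_zero, mul_one, mul_one, mul_one] at h
  rw [h, ← phaseGate_zero]
  congr 1
  funext x; simp

lemma XmatN_eq [NeZero p] (i : Fin n) : XmatN p n i = shiftGate p n (Pi.single i 1) := by
  ext r c
  have : Function.update c i (c i + 1) = c + Pi.single i 1 := by
    funext j
    by_cases h : j = i
    · subst h; simp
    · simp [h]
  simp [XmatN, shiftGate, this]

lemma ZmatN_eq [NeZero p] (i : Fin n) :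
    ZmatN p n i = phaseGate p n (fun x => ((x i).val : ℝ) / p) := by
  ext r c
  rw [ZmatN, phaseGate, Matrix.of_apply, Matrix.diagonal_apply]
  split_ifs with h
  · subst h; push_cast; rfl
  · rfl

lemma pauliPhase_eq : ∃ φ : ℝ, pauliPhase p = Complex.exp (φ * Complex.I) := by
  rw [pauliPhase]
  split_ifs
  · exact ⟨Real.pi / 2, by push_cast; rw [Complex.exp_pi_div_two_mul_I]⟩
  · exact ⟨2 * Real.pi / p, by congr 1; push_cast; ring⟩

lemma coord_div_mem (i : Fin n) : (fun x => ((x i).val : ℝ) / p) ∈ phaseFn p n 1 := by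
  have h := monomial_mem (p := p) (m := 1) (w := 1) (Pi.single i 1 : Fin n → ℕ)
    (by simp)
  convert h using 2 with x
  rw [pow_one, Finset.prod_eq_single i (fun j _ hj => by simp [hj]) (by simp)]
  simp

/-- Every Pauli operator is a diagonal gate of degree `1` times a shift. -/
lemma pauli_form [NeZero p] (hp : p.Prime) {P : Matrix (Fin n → ZMod p) (Fin n → ZMod p) ℂ}
    (hP : P ∈ PauliN p n) :
    ∃ g ∈ phaseFn p n 1, ∃ v, P = phaseGate p n g * shiftGate p n v := by
  induction hP using Submonoid.closure_induction with
  | mem P h =>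
    rcases h with (h | ⟨i, rfl⟩) | ⟨i, rfl⟩
    · obtain ⟨φ, hφ⟩ := pauliPhase_eq (p := p)
      rw [Set.mem_singleton_iff, hφ, smul_one_eq_phaseGate] at h
      exact ⟨_, const_mem 1 _, 0, by rw [shiftGate_zero, mul_one, h]⟩
    · exact ⟨0, zero_mem _, _, by rw [XmatN_eq, phaseGate_zero, one_mul]⟩
    · exact ⟨_, coord_div_mem i, 0, by rw [ZmatN_eq, shiftGate_zero, mul_one]⟩
  | one => exact ⟨0, zero_mem _, 0, by rw [phaseGate_zero, shiftGate_zero, mul_one]⟩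
  | mul P Q _ _ hP hQ =>
    obtain ⟨f, hf, v, rfl⟩ := hP
    obtain ⟨g, hg, w, rfl⟩ := hQ
    exact ⟨_, add_mem hf (shift_mem hp (-v) hg), _, gate_mul_gate f g v w⟩

lemma cliffN_one_one [NeZero p] :
    (1 : Matrix (Fin n → ZMod p) (Fin n → ZMod p) ℂ) ∈ CliffN p n 1 :=
  ⟨0, 1, one_mem (Submonoid.closure _), by simp⟩

lemma cliffN_one_mul [NeZero p] {U V : Matrix (Fin n → ZMod p) (Fin n → ZMod p) ℂ}
    (hU : U ∈ CliffN p n 1) (hV : V ∈ CliffN p n 1) : U * V ∈ CliffN p n 1 := by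
  obtain ⟨φ, P, hP, rfl⟩ := hU
  obtain ⟨ψ, Q, hQ, rfl⟩ := hV
  refine ⟨φ + ψ, P * Q, mul_mem (S := Submonoid _) hP hQ, ?_⟩
  rw [smul_mul_smul_comm, ← Complex.exp_add]
  push_cast; rw [add_mul]

lemma cliffN_one_of_pauli [NeZero p] {P : Matrix (Fin n → ZMod p) (Fin n → ZMod p) ℂ}
    (hP : P ∈ PauliN p n) : P ∈ CliffN p n 1 := ⟨0, P, hP, by simp⟩

lemma const_mem_cliffN_one [NeZero p] (c : ℝ) : phaseGate p n (fun _ => c) ∈ CliffN p n 1 :=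
  ⟨_, 1, one_mem (Submonoid.closure _), phaseGate_const c⟩

lemma phaseGate_nsmul [NeZero p] (f : (Fin n → ZMod p) → ℝ) (k : ℕ) :
    phaseGate p n (k • f) = phaseGate p n f ^ k := by
  induction k with
  | zero => rw [zero_smul, phaseGate_zero, pow_zero]
  | succ k ih => rw [succ_nsmul, phaseGate_add, ih, pow_succ]

/-- Generators of degree at most `1` are trivial modulo `1`, constant, or `x_i / p`. -/
lemma binomFn_degree_one [NeZero p] (hp : p.Prime) {m : ℕ} {a : Fin n → ℕ}
    (h : (p - 1) * m + ∑ i, a i ≤ 1 + (p - 1)) :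
    (∃ k : (Fin n → ZMod p) → ℤ, binomFn p n m a = fun x => (k x : ℝ)) ∨
      (∃ c : ℝ, binomFn p n m a = fun _ => c) ∨
      ∃ i, binomFn p n m a = fun x => ((x i).val : ℝ) / p := by
  by_cases ha : ∀ i, a i = 0
  · exact Or.inr (Or.inl ⟨1 / p ^ m, by funext x; simp [binomFn, ha]⟩)
  rcases m with _ | m
  · exact Or.inl ⟨fun x => ∏ i, ((x i).val.choose (a i) : ℤ), by funext x; simp [binomFn]⟩
  push Not at ha
  obtain ⟨i, hi⟩ := ha
  have hsum := Finset.add_sum_erase _ a (Finset.mem_univ i)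
  have hp2 := hp.two_le
  rw [Nat.mul_succ] at h
  have hm : m = 0 := by
    have : (p - 1) * m = 0 := by omega
    rcases Nat.mul_eq_zero.1 this with h' | h' <;> omega
  subst hm
  have hai : a i = 1 := by omega
  have hz : ∀ j ∈ Finset.univ.erase i, a j = 0 := by
    have : ∑ j ∈ Finset.univ.erase i, a j = 0 := by omega
    simpa only [Finset.sum_eq_zero_iff] using this
  refine Or.inr (Or.inr ⟨i, ?_⟩)
  funext x
  rw [binomFn, ← Finset.mul_prod_erase _ _ (Finset.mem_univ i),
    Finset.prod_eq_one fun j hj => by rw [hz j hj]; simp, hai]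
  simp

lemma neg_coord_mem_cliffN_one [NeZero p] (hp : p.Prime) (i : Fin n) :
    phaseGate p n (-fun x => ((x i).val : ℝ) / p) ∈ CliffN p n 1 := by
  -- `Z⁻¹ = Z^(p-1)`, since `p · (x_i / p)` is an integer.
  have h : phaseGate p n (-fun x => ((x i).val : ℝ) / p) = ZmatN p n i ^ (p - 1) := by
    have h1 := phaseGate_int (p := p) (n := n) (fun x => -((x i).val : ℤ))
    rw [ZmatN_eq, ← phaseGate_nsmul, ← one_mul (phaseGate p n ((p - 1) • _)), ← h1,
      ← phaseGate_add]
    congr 1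
    funext x
    change -(((x i).val : ℝ) / p) = ((-((x i).val : ℤ) : ℤ) : ℝ) + (p - 1) • (((x i).val : ℝ) / p)
    have hp0 : (p : ℝ) ≠ 0 := by exact_mod_cast hp.ne_zero
    rw [nsmul_eq_mul, Nat.cast_sub hp.one_le]
    push_cast
    field_simp
    ring
  rw [h]
  have hZ : ZmatN p n i ∈ Submonoid.closure
      ({pauliPhase p • (1 : Matrix (Fin n → ZMod p) (Fin n → ZMod p) ℂ)} ∪
        (Set.range (XmatN p n)) ∪ (Set.range (ZmatN p n))) :=
    Submonoid.subset_closure (Or.inr ⟨i, rfl⟩)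
  exact cliffN_one_of_pauli (Submonoid.pow_mem _ hZ _)

/-- Diagonal gates of degree `1` are Paulis up to a phase. Inverses are carried along because the
Pauli group is presented as a monoid. -/
lemma phaseGate_mem_cliffN_one [NeZero p] (hp : p.Prime) {f : (Fin n → ZMod p) → ℝ}
    (hf : f ∈ phaseFn p n 1) :
    phaseGate p n f ∈ CliffN p n 1 ∧ phaseGate p n (-f) ∈ CliffN p n 1 := by
  have hc : ∀ c : ℝ, phaseGate p n (fun _ => c) ∈ CliffN p n 1 ∧
      phaseGate p n (-fun _ => c) ∈ CliffN p n 1 := fun c =>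
    ⟨const_mem_cliffN_one c, const_mem_cliffN_one (-c)⟩
  have hi : ∀ k : (Fin n → ZMod p) → ℤ, phaseGate p n (fun x => (k x : ℝ)) ∈ CliffN p n 1 ∧
      phaseGate p n (-fun x => (k x : ℝ)) ∈ CliffN p n 1 := fun k => by
    have h2 : (-fun x => (k x : ℝ)) = fun x => (((-k) x : ℤ) : ℝ) := by funext x; simp
    rw [h2, phaseGate_int, phaseGate_int]
    exact ⟨cliffN_one_one, cliffN_one_one⟩
  induction hf using AddSubgroup.closure_induction with
  | mem f hf =>
    rcases hf with (⟨c, rfl⟩ | ⟨k, rfl⟩) | ⟨m, a, h, rfl⟩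
    · exact hc c
    · exact hi k
    · rcases binomFn_degree_one hp h with ⟨k, hk⟩ | ⟨c, hk⟩ | ⟨i, hk⟩
      · rw [hk]; exact hi k
      · rw [hk]; exact hc c
      · rw [hk]
        refine ⟨?_, neg_coord_mem_cliffN_one hp i⟩
        rw [← ZmatN_eq]
        exact cliffN_one_of_pauli (Submonoid.subset_closure (Or.inr ⟨i, rfl⟩))
  | zero => rw [neg_zero, phaseGate_zero]; exact ⟨cliffN_one_one, cliffN_one_one⟩
  | add f g _ _ hf hg =>
    rw [neg_add, phaseGate_add, phaseGate_add]
    exact ⟨cliffN_one_mul hf.1 hg.1, cliffN_one_mul hf.2 hg.2⟩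
  | neg f _ hf => rw [neg_neg]; exact hf.symm

lemma shiftGate_mem_pauli [NeZero p] (v : Fin n → ZMod p) : shiftGate p n v ∈ PauliN p n := by
  let H : AddSubmonoid (Fin n → ZMod p) :=
    { carrier := {v | shiftGate p n v ∈ PauliN p n}
      zero_mem' := by
        change shiftGate p n 0 ∈ PauliN p n
        rw [shiftGate_zero]; exact one_mem (Submonoid.closure _)
      add_mem' := by
        intro v w hv hw
        change shiftGate p n (v + w) ∈ PauliN p n
        rw [shiftGate_add]; exact mul_mem (S := Submonoid _) hv hw }
  have key : v ∈ H := by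
    rw [eq_sum_val_smul_single v]
    refine sum_mem fun i _ => nsmul_mem ?_ _
    change shiftGate p n _ ∈ PauliN p n
    rw [← XmatN_eq]
    exact Submonoid.subset_closure (Or.inl (Or.inr ⟨i, rfl⟩))
  exact key

/-- A diagonal gate of degree at most `k` times a shift lies in the `k`-th level. -/
lemma gate_mem_cliffN [NeZero p] (hp : p.Prime) (k : ℕ) :
    ∀ f ∈ phaseFn p n (k + 1), ∀ v, phaseGate p n f * shiftGate p n v ∈ CliffN p n (k + 1) := by
  induction k with
  | zero =>
    intro f hf v
    exact cliffN_one_mul (phaseGate_mem_cliffN_one hp hf).1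
      (cliffN_one_of_pauli (shiftGate_mem_pauli v))
  | succ k ih =>
    intro f hf v
    refine ⟨gate_mem_unitary f v, fun P hP => ?_⟩
    obtain ⟨g, hg, w, rfl⟩ := pauli_form hp hP
    rw [gate_conj]
    exact ih _ (sub_mem (phaseFn_mono (by omega) (shift_mem hp (-v) hg)) (diff_mem hp (-w) f hf)) w

/-- The diagonal gates of degree at most `w`, as a submonoid. -/
def phaseGates (p n w : ℕ) [NeZero p] : Submonoid (Matrix (Fin n → ZMod p) (Fin n → ZMod p) ℂ) where
  carrier := {U | ∃ f ∈ phaseFn p n w, U = phaseGate p n f}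
  one_mem' := ⟨0, zero_mem _, phaseGate_zero.symm⟩
  mul_mem' := by
    rintro _ _ ⟨f, hf, rfl⟩ ⟨g, hg, rfl⟩
    exact ⟨f + g, add_mem hf hg, (phaseGate_add f g).symm⟩

lemma UmaN_mem [NeZero p] {m w : ℕ} {a : Fin n → ℕ}
    (h : (p - 1) * m + ∑ i, a i ≤ w + (p - 1)) : UmaN p n m a ∈ phaseGates p n w := by
  refine ⟨_, monomial_mem a h, ?_⟩
  ext r c
  rw [UmaN, phaseGate, Matrix.of_apply, Matrix.diagonal_apply]
  split_ifs with h
  · push_cast; rfl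
  · rfl

/-- All of `D_{m,a}` has degree at most the weight of `(m, a)`: neither `b ≤ a` at level `m` nor
`c` with `wt(c) ≤ wt(a) + (p-1)` at level `m - 1` has larger weight. -/
lemma DgrpN_subset [NeZero p] (w m : ℕ) (a : Fin n → ℕ)
    (h : (p - 1) * m + ∑ i, a i ≤ w + (p - 1)) :
    DgrpN p n m a ⊆ phaseGates p n w := by
  have hφ : ∀ φ : ℝ, Complex.exp (φ * Complex.I) •
      (1 : Matrix (Fin n → ZMod p) (Fin n → ZMod p) ℂ) ∈ phaseGates p n w := fun φ =>
    ⟨_, const_mem w _, smul_one_eq_phaseGate φ⟩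
  match m with
  | 0 =>
    intro U hU
    rw [DgrpN] at hU
    obtain ⟨φ, rfl⟩ := hU
    exact hφ φ
  | m + 1 =>
    intro U hU
    rw [DgrpN] at hU
    obtain ⟨G, hG, φ, D, hD, E, hE, rfl⟩ := hU
    rw [← one_mul (G * D * E), ← smul_mul_assoc]
    refine mul_mem (hφ φ) (mul_mem (mul_mem ?_ ?_) ?_)
    · exact (Submonoid.closure_le.2 (Set.singleton_subset_iff.2 (UmaN_mem h))) hG
    · refine (Submonoid.closure_le.2 (Set.iUnion₂_subset fun b hb => ?_)) hD
      have hlt := hb.2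
      exact DgrpN_subset w (m + 1) b (by omega)
    · refine (Submonoid.closure_le.2 (Set.iUnion₂_subset fun c hc => ?_)) hE
      have hle := hc.2
      exact DgrpN_subset w m c (by rw [Nat.mul_succ] at h; omega)
  termination_by (m, ∑ i, a i)
  decreasing_by
  · exact Prod.Lex.right _ hlt
  · exact Prod.Lex.left _ _ (Nat.lt_succ_self m)

end Gates

/-- For `n` qudits of prime dimension `p` and every `w ≥ 1`, the group
`D_w` is contained in the set `C^w_d` of diagonal gates in the `w`-th level of the
Clifford hierarchy. -/
theorem Dw_subset_diagonal_clifford (p n w : ℕ) [NeZero p] (hp : p.Prime) (hn : 1 ≤ n)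
    (hw : 1 ≤ w) :
    Dw p n w ⊆ CliffDN p n w := by
  have hsub : Dw p n w ⊆ phaseGates p n w := by
    refine Submonoid.closure_le.2 (Set.iUnion₂_subset ?_)
    rintro ⟨m, a⟩ ⟨hm, -, hx⟩
    refine DgrpN_subset w m a ?_
    obtain ⟨m, rfl⟩ := Nat.exists_eq_add_of_le' hm
    rw [Nat.mul_succ]
    simp only [Nat.add_sub_cancel] at hx
    omega
  intro U hU
  obtain ⟨f, hf, rfl⟩ := hsub hU
  obtain ⟨k, rfl⟩ := Nat.exists_eq_add_of_le' hw
  refine ⟨?_, Matrix.isDiag_diagonal _⟩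
  simpa [shiftGate_zero] using gate_mem_cliffN hp k f hf 0
end

section
/- For n qudits of prime dimension p and every w ≥ 1, the set C^w_d of diagonal gates in the w-th level of the Clifford hierarchy is contained in the group D_w. -/
open Matrix Complex

/-! ### Differences in the group ring -/

/-- If `(D + 1)^p = 1`, then `p D` is a multiple of `D^p`.  Expanding the `p`-th power gives
`p D (1 + q D) = - D^p`; substituting this relation into itself raises the order of the
remaining error term `p B D^r` until `r = p`. -/
lemma pD_eq {R : Type*} [CommRing R] {p : ℕ} (hp : p.Prime) {D : R} (h : (D + 1) ^ p = 1) :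
    ∃ A : R, (p : R) * D = A * D ^ p := by
  obtain ⟨q, hq⟩ : ∃ q : R, (D + 1) ^ p = D ^ p + 1 + p * D * (1 + q * D) := by
    -- the sum in `add_pow_prime_eq` is congruent modulo `D` to its first term, which is `1`
    have hS : ∃ q : R, ∑ k ∈ Finset.Ioo 0 p, D ^ (k - 1) * ((p.choose k / p : ℕ) : R)
        = 1 + q * D := by
      have h1 : Finset.Ioo 0 p = insert 1 (Finset.Ioo 1 p) := by
        ext k
        have := hp.two_le
        simp only [Finset.mem_Ioo, Finset.mem_insert]
        omega
      have h2 : D ∣ ∑ k ∈ Finset.Ioo 1 p, D ^ (k - 1) * ((p.choose k / p : ℕ) : R) := by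
        refine Finset.dvd_sum fun k hk => Dvd.dvd.mul_right (dvd_pow_self _ ?_) _
        have := (Finset.mem_Ioo.1 hk).1
        omega
      obtain ⟨q, hq⟩ := h2
      refine ⟨q, ?_⟩
      rw [h1, Finset.sum_insert (by simp), hq]
      simp [Nat.div_self hp.pos, mul_comm]
    obtain ⟨q, hq⟩ := hS
    refine ⟨q, ?_⟩
    rw [add_pow_prime_eq hp, ← hq]
    simp [mul_assoc]
  have key : (p : R) * D = - D ^ p - p * q * D ^ 2 := by
    rw [h] at hq
    linear_combination -hq
  have step : ∀ r, ∃ A B : R, (p : R) * D = A * D ^ p + p * B * D ^ (r + 1) := by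
    intro r
    induction r with
    | zero => exact ⟨0, 1, by ring⟩
    | succ r ih =>
      obtain ⟨A, B, hAB⟩ := ih
      refine ⟨A - B * D ^ r, - B * q, ?_⟩
      rw [hAB]
      linear_combination (B * D ^ r) * key
  obtain ⟨A, B, hAB⟩ := step (p - 1)
  rw [Nat.sub_add_cancel hp.one_le] at hAB
  exact ⟨A + p * B, by linear_combination hAB⟩

/-- Iterating `pD_eq`: each factor `p` is worth `p - 1` factors `D`. -/
lemma pow_mul_D {R : Type*} [CommRing R] {p : ℕ} (hp : p.Prime) {D : R} (h : (D + 1) ^ p = 1)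
    (t : ℕ) : ∃ A : R, (p : R) ^ t * D = A * D ^ (1 + t * (p - 1)) := by
  obtain ⟨B, hB⟩ := pD_eq hp h
  induction t with
  | zero => exact ⟨1, by simp⟩
  | succ t ih =>
    obtain ⟨A, hA⟩ := ih
    refine ⟨A * B, ?_⟩
    have e : 1 + (t + 1) * (p - 1) = p + t * (p - 1) := by
      have := hp.one_le
      rw [add_mul]; omega
    rw [e, pow_succ]
    calc (p : R) ^ t * p * D = p * (p ^ t * D) := by ring
      _ = A * (p * D) * D ^ (t * (p - 1)) := by rw [hA]; ring
      _ = _ := by rw [hB]; ring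

/-- The difference element `[e_i] - 1` of the group ring `ℤ[(ZMod p)^n]`. -/
noncomputable def shiftDiff (p n : ℕ) (i : Fin n) : AddMonoidAlgebra ℤ (Fin n → ZMod p) :=
  AddMonoidAlgebra.single (Pi.single i 1) 1 - 1

/-- The ideal of `ℤ[(ZMod p)^n]` generated by the differences `[e_i] - 1`. -/
noncomputable def augIdeal (p n : ℕ) : Ideal (AddMonoidAlgebra ℤ (Fin n → ZMod p)) :=
  Ideal.span (Set.range (shiftDiff p n))

/-- The additive extension of a phase function `u` to the group ring: `∑ c_x [x]` is sent to
`∏ u(x)^(c_x)`, written additively. -/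
noncomputable def evalHom {p n : ℕ} (u : (Fin n → ZMod p) → Circle) :
    AddMonoidAlgebra ℤ (Fin n → ZMod p) →+ Additive Circle :=
  (Finsupp.liftAddHom fun x => zmultiplesHom _ (Additive.ofMul (u x))).comp
    (AddMonoidAlgebra.coeffAddEquiv).toAddMonoidHom

lemma evalHom_single {p n : ℕ} (u : (Fin n → ZMod p) → Circle) (x) (c : ℤ) :
    evalHom u (AddMonoidAlgebra.single x c) = c • Additive.ofMul (u x) := by
  simp [evalHom]

lemma evalHom_mul_shiftDiff {p n : ℕ} (u : (Fin n → ZMod p) → Circle) (i : Fin n) (y) :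
    evalHom u (y * shiftDiff p n i) =
      - evalHom (fun x => u x / u (x + Pi.single i 1)) y := by
  induction y using AddMonoidAlgebra.induction_linear with
  | zero => simp
  | add f g hf hg => rw [add_mul, map_add, map_add, hf, hg, neg_add]
  | single x c =>
    rw [shiftDiff, mul_sub, mul_one, AddMonoidAlgebra.single_mul_single, map_sub,
      evalHom_single, evalHom_single, evalHom_single, mul_one, ofMul_div, smul_sub, neg_sub]

/-- If all first quotients `u(x) / u(x + e_i)` have degree less than `k`, then `u` has degree
less than `k + 1`. -/
lemma evalHom_vanish_succ {p n : ℕ} (u : (Fin n → ZMod p) → Circle) (k : ℕ)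
    (h : ∀ i, ∀ z ∈ augIdeal p n ^ k,
      evalHom (fun x => u x / u (x + Pi.single i 1)) z = 0) :
    ∀ z ∈ augIdeal p n ^ (k + 1), evalHom u z = 0 := by
  intro z hz
  rw [pow_succ] at hz
  refine Submodule.mul_induction_on hz ?_ ?_
  · intro a ha b hb
    induction hb using Submodule.span_induction generalizing a with
    | mem b hb =>
      obtain ⟨i, rfl⟩ := hb
      rw [evalHom_mul_shiftDiff, h i a ha, neg_zero]
    | zero => simp
    | add x y _ _ hx hy => rw [mul_add, map_add, hx a ha, hy a ha, add_zero]
    | smul c x _ hx =>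
      rw [smul_eq_mul, ← mul_assoc]
      exact hx _ (Ideal.mul_mem_right _ _ ha)
  · intro x y hx hy
    rw [map_add, hx, hy, add_zero]

lemma shiftDiff_add_one_pow {p n : ℕ} (i : Fin n) (k : ℕ) :
    (shiftDiff p n i + 1) ^ k = AddMonoidAlgebra.single (Pi.single i (k : ZMod p)) 1 := by
  rw [shiftDiff, sub_add_cancel, AddMonoidAlgebra.single_pow, one_pow, ← Pi.single_smul]
  simp

/-- Newton expansion of `[x]`, obtained by expanding `∏ (1 + D i)^(x i)`.  Terms with
`a i > x i` vanish, so all exponents can be taken in `range p`. -/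
lemma single_eq_newton {p n : ℕ} [NeZero p] (x : Fin n → ZMod p) :
    AddMonoidAlgebra.single x (1 : ℤ) = ∑ a ∈ Fintype.piFinset fun _ : Fin n => Finset.range p,
      ((∏ i, (x i).val.choose (a i) : ℕ) : AddMonoidAlgebra ℤ (Fin n → ZMod p)) *
        ∏ i, shiftDiff p n i ^ a i := by
  have h1 : AddMonoidAlgebra.single x (1 : ℤ) = ∏ i, (shiftDiff p n i + 1) ^ (x i).val := by
    simp only [shiftDiff_add_one_pow, ZMod.natCast_zmod_val]
    rw [AddMonoidAlgebra.prod_single]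
    simp [Finset.univ_sum_single]
  have h2 : ∀ i, (shiftDiff p n i + 1) ^ (x i).val = ∑ k ∈ Finset.range p,
      (((x i).val.choose k : ℕ) : AddMonoidAlgebra ℤ (Fin n → ZMod p)) * shiftDiff p n i ^ k := by
    intro i
    rw [add_pow]
    have : Finset.range ((x i).val + 1) ⊆ Finset.range p := by
      have := ZMod.val_lt (x i)
      intro k; simp only [Finset.mem_range]; omega
    rw [← Finset.sum_subset this]
    · exact Finset.sum_congr rfl fun k _ => by simp [mul_comm]
    · intro k _ hk
      rw [Nat.choose_eq_zero_of_lt (by simpa using hk)]; simp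
  rw [h1, Finset.prod_congr rfl fun i _ => h2 i, Finset.prod_univ_sum]
  exact Finset.sum_congr rfl fun a _ => by rw [Finset.prod_mul_distrib]; push_cast; rfl

lemma shiftDiff_mem {p n : ℕ} (i : Fin n) : shiftDiff p n i ∈ augIdeal p n :=
  Ideal.subset_span (Set.mem_range_self i)

lemma prod_shiftDiff_mem {p n : ℕ} (a : Fin n → ℕ) :
    ∏ i, shiftDiff p n i ^ a i ∈ augIdeal p n ^ ∑ i, a i := by
  rw [← Finset.prod_pow_eq_pow_sum]
  exact Ideal.prod_mem_prod fun i _ => Ideal.pow_mem_pow (shiftDiff_mem i) _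

lemma pow_mul_prod_mem {p n : ℕ} (hp : p.Prime) (a : Fin n → ℕ) (ha : a ≠ 0) (t : ℕ) :
    ((p ^ t : ℕ) : AddMonoidAlgebra ℤ (Fin n → ZMod p)) * ∏ i, shiftDiff p n i ^ a i ∈
      augIdeal p n ^ (∑ i, a i + t * (p - 1)) := by
  obtain ⟨i, hi⟩ := Function.ne_iff.1 ha
  obtain ⟨m, hm⟩ := Nat.exists_eq_add_one_of_ne_zero hi
  obtain ⟨A, hA⟩ := pow_mul_D hp (D := shiftDiff p n i) (by
    rw [shiftDiff_add_one_pow]; simp [AddMonoidAlgebra.one_def]) t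
  have hmem : shiftDiff p n i ^ (t * (p - 1)) ∈ augIdeal p n ^ (t * (p - 1)) :=
    Ideal.pow_mem_pow (shiftDiff_mem i) _
  have key := Ideal.mul_mem_mul (prod_shiftDiff_mem (p := p) a) hmem
  rw [← pow_add] at key
  convert Ideal.mul_mem_left _ A key using 1
  rw [← Finset.mul_prod_erase _ _ (Finset.mem_univ i), hm]
  push_cast
  linear_combination (shiftDiff p n i ^ m * ∏ x ∈ Finset.univ.erase i, shiftDiff p n x ^ a x) * hA

/-- Multiplicative Newton expansion of a phase function of degree at most `w`, with the bound on
the orders of its nonconstant coefficients. -/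
lemma newton_circle {p n : ℕ} [NeZero p] (hp : p.Prime) (u : (Fin n → ZMod p) → Circle) (w : ℕ)
    (h : ∀ z ∈ augIdeal p n ^ (w + 1), evalHom u z = 0) :
    ∃ θ : (Fin n → ℕ) → Circle,
      (∀ a : Fin n → ℕ, a ≠ 0 → ∀ t, w + 1 ≤ ∑ i, a i + t * (p - 1) → θ a ^ p ^ t = 1) ∧
      ∀ x, u x = ∏ a ∈ Fintype.piFinset fun _ : Fin n => Finset.range p,
        θ a ^ ∏ i, (x i).val.choose (a i) := by
  refine ⟨fun a => (evalHom u (∏ i, shiftDiff p n i ^ a i)).toMul, ?_, ?_⟩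
  · intro a ha t ht
    have h1 := h _ (Ideal.pow_le_pow_right ht (pow_mul_prod_mem hp a ha t))
    rw [← nsmul_eq_mul, map_nsmul] at h1
    exact congrArg Additive.toMul h1
  · intro x
    have h1 := congrArg (evalHom u) (single_eq_newton x)
    rw [evalHom_single, one_smul, map_sum] at h1
    simp only [← nsmul_eq_mul, map_nsmul] at h1
    have h2 := congrArg Additive.toMul h1
    rw [toMul_sum] at h2
    simpa using h2

/-! ### Pauli gates and the Clifford hierarchy -/

lemma XmatN_apply {p n : ℕ} [NeZero p] (i : Fin n) (r c : Fin n → ZMod p) :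
    XmatN p n i r c = if r = c + Pi.single i 1 then 1 else 0 := by
  have : Function.update c i (c i + 1) = c + Pi.single i 1 := by
    ext j
    by_cases hj : j = i
    · subst hj; simp
    · simp [hj]
  rw [XmatN, Matrix.of_apply, this]

lemma XmatN_pow_apply {p n : ℕ} [NeZero p] (i : Fin n) (k : ℕ) (r c : Fin n → ZMod p) :
    (XmatN p n i ^ k) r c = if r = c + Pi.single i (k : ZMod p) then 1 else 0 := by
  induction k generalizing r c with
  | zero => simp [Matrix.one_apply]
  | succ k ih =>
    rw [pow_succ, Matrix.mul_apply]
    simp only [ih, XmatN_apply, mul_ite, mul_one, mul_zero, Finset.sum_ite_eq',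
      Finset.mem_univ, if_true]
    rw [Nat.cast_succ, Pi.single_add, add_assoc, add_comm (Pi.single i 1)]

lemma XmatN_pow_self {p n : ℕ} [NeZero p] (i : Fin n) : XmatN p n i ^ p = 1 := by
  ext r c
  rw [XmatN_pow_apply]
  simp [Matrix.one_apply]

lemma XmatN_mem_unitary {p n : ℕ} [NeZero p] (i : Fin n) :
    XmatN p n i ∈ Matrix.unitaryGroup (Fin n → ZMod p) ℂ := by
  rw [Matrix.mem_unitaryGroup_iff']
  ext r c
  rw [Matrix.star_eq_conjTranspose, Matrix.mul_apply]
  simp [XmatN_apply, Matrix.one_apply, eq_comm]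

lemma ZmatN_eq_diagonal {p n : ℕ} [NeZero p] (i : Fin n) :
    ZmatN p n i = Matrix.diagonal fun c =>
      Complex.exp (2 * Real.pi * Complex.I / p) ^ (c i).val := by
  ext r c
  rw [ZmatN, Matrix.of_apply, Matrix.diagonal_apply]
  split_ifs with h
  · rw [← Complex.exp_nat_mul, h]
    congr 1
    ring
  · rfl

lemma exp_pow_self (p : ℕ) [NeZero p] : Complex.exp (2 * Real.pi * Complex.I / p) ^ p = 1 :=
  (Complex.isPrimitiveRoot_exp p (NeZero.ne p)).pow_eq_one

lemma ZmatN_pow_self {p n : ℕ} [NeZero p] (i : Fin n) : ZmatN p n i ^ p = 1 := by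
  rw [ZmatN_eq_diagonal, Matrix.diagonal_pow, ← Matrix.diagonal_one]
  congr 1
  ext c
  simp only [Pi.pow_apply]
  rw [pow_right_comm, exp_pow_self, one_pow]

lemma star_mul_self_of_pow_eq_one {z : ℂ} {k : ℕ} (hk : k ≠ 0) (h : z ^ k = 1) :
    star z * z = 1 := by
  have h1 : ‖z‖ = 1 := norm_eq_one_of_pow_eq_one h hk
  have := Complex.conj_mul' z
  rw [h1] at this
  simpa using this

lemma ZmatN_mem_unitary {p n : ℕ} [NeZero p] (i : Fin n) :
    ZmatN p n i ∈ Matrix.unitaryGroup (Fin n → ZMod p) ℂ := by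
  rw [Matrix.mem_unitaryGroup_iff', ZmatN_eq_diagonal, Matrix.star_eq_conjTranspose,
    Matrix.diagonal_conjTranspose, Matrix.diagonal_mul_diagonal, ← Matrix.diagonal_one]
  congr 1
  ext c
  refine star_mul_self_of_pow_eq_one (NeZero.ne p) ?_
  rw [pow_right_comm, exp_pow_self, one_pow]

lemma pauliPhase_pow (p : ℕ) [NeZero p] : pauliPhase p ^ (4 * p) = 1 := by
  rw [pauliPhase]
  split_ifs with h
  · rw [pow_mul, Complex.I_pow_four, one_pow]
  · rw [mul_comm 4 p, pow_mul, exp_pow_self, one_pow]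

lemma smul_one_mem_unitary {ι : Type*} [Fintype ι] [DecidableEq ι] {z : ℂ} (h : star z * z = 1) :
    z • (1 : Matrix ι ι ℂ) ∈ Matrix.unitaryGroup ι ℂ := by
  rw [Matrix.mem_unitaryGroup_iff', star_smul, star_one, smul_mul_smul_comm, h, one_mul, one_smul]

/-- The generators of the Pauli group are unitary of finite order dividing `4 p`; in particular
their adjoints are powers of themselves. -/
lemma pauliN_generator {p n : ℕ} [NeZero p] {g : Matrix (Fin n → ZMod p) (Fin n → ZMod p) ℂ}
    (hg : g ∈ ({pauliPhase p • (1 : Matrix (Fin n → ZMod p) (Fin n → ZMod p) ℂ)} ∪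
        (Set.range (XmatN p n)) ∪ (Set.range (ZmatN p n)))) :
    g ∈ Matrix.unitaryGroup (Fin n → ZMod p) ℂ ∧ g ^ (4 * p) = 1 := by
  rcases hg with (hg | ⟨i, rfl⟩) | ⟨i, rfl⟩
  · rw [Set.mem_singleton_iff] at hg
    subst hg
    refine ⟨smul_one_mem_unitary (star_mul_self_of_pow_eq_one (k := 4 * p) ?_ (pauliPhase_pow p)),
      ?_⟩
    · have := NeZero.ne p
      omega
    · rw [smul_pow, pauliPhase_pow, one_pow, one_smul]
  · exact ⟨XmatN_mem_unitary i, by rw [mul_comm, pow_mul, XmatN_pow_self, one_pow]⟩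
  · exact ⟨ZmatN_mem_unitary i, by rw [mul_comm, pow_mul, ZmatN_pow_self, one_pow]⟩

lemma pauliN_unitary {p n : ℕ} [NeZero p] {P : Matrix (Fin n → ZMod p) (Fin n → ZMod p) ℂ}
    (hP : P ∈ PauliN p n) : P ∈ Matrix.unitaryGroup (Fin n → ZMod p) ℂ :=
  (Submonoid.closure_le (S := Matrix.unitaryGroup (Fin n → ZMod p) ℂ)).2
    (fun _ hg => (pauliN_generator hg).1) hP

lemma pauliN_mul {p n : ℕ} [NeZero p] {P Q : Matrix (Fin n → ZMod p) (Fin n → ZMod p) ℂ}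
    (hP : P ∈ PauliN p n) (hQ : Q ∈ PauliN p n) : P * Q ∈ PauliN p n :=
  Submonoid.mul_mem _ hP hQ

lemma pauliN_star {p n : ℕ} [NeZero p] {P : Matrix (Fin n → ZMod p) (Fin n → ZMod p) ℂ}
    (hP : P ∈ PauliN p n) : Pᴴ ∈ PauliN p n := by
  rw [PauliN, SetLike.mem_coe] at hP
  induction hP using Submonoid.closure_induction with
  | mem g hg =>
    obtain ⟨h1, h2⟩ := pauliN_generator hg
    have h3 : gᴴ = g ^ (4 * p - 1) := by
      have h4 : gᴴ * g = 1 := (Matrix.mem_unitaryGroup_iff').1 h1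
      calc gᴴ = gᴴ * g ^ (4 * p) := by rw [h2, mul_one]
        _ = gᴴ * (g * g ^ (4 * p - 1)) := by
          rw [← pow_succ', Nat.sub_add_cancel]
          have := NeZero.ne p
          omega
        _ = _ := by rw [← mul_assoc, h4, one_mul]
    rw [h3]
    exact Submonoid.pow_mem _ (Submonoid.subset_closure hg) _
  | one => rw [Matrix.conjTranspose_one]; exact Submonoid.one_mem _
  | mul x y _ _ hx hy => rw [Matrix.conjTranspose_mul]; exact pauliN_mul hy hx

lemma cliffN_unitary {p n : ℕ} [NeZero p] (k : ℕ)
    {U : Matrix (Fin n → ZMod p) (Fin n → ZMod p) ℂ}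
    (hU : U ∈ CliffN p n (k + 1)) : U ∈ Matrix.unitaryGroup (Fin n → ZMod p) ℂ := by
  cases k with
  | zero =>
    obtain ⟨φ, P, hP, rfl⟩ := hU
    have h1 : star (Complex.exp (φ * Complex.I)) * Complex.exp (φ * Complex.I) = 1 := by
      have := Complex.conj_mul' (Complex.exp (φ * Complex.I))
      rw [Complex.norm_exp_ofReal_mul_I] at this
      simpa using this
    have := mul_mem (smul_one_mem_unitary h1) (pauliN_unitary hP)
    rwa [smul_one_mul] at this
  | succ k => exact hU.1

/-- Each level of the Clifford hierarchy is stable under right multiplication by Pauli gates. -/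
lemma cliffN_mul_pauli {p n : ℕ} [NeZero p] (k : ℕ)
    {U Q : Matrix (Fin n → ZMod p) (Fin n → ZMod p) ℂ}
    (hU : U ∈ CliffN p n (k + 1)) (hQ : Q ∈ PauliN p n) : U * Q ∈ CliffN p n (k + 1) := by
  cases k with
  | zero =>
    obtain ⟨φ, P, hP, rfl⟩ := hU
    exact ⟨φ, P * Q, pauliN_mul hP hQ, by rw [smul_mul_assoc]⟩
  | succ k =>
    refine ⟨mul_mem hU.1 (pauliN_unitary hQ), fun P hP => ?_⟩
    have := hU.2 _ (pauliN_mul (pauliN_mul hQ hP) (pauliN_star hQ))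
    rw [Matrix.conjTranspose_mul]
    simpa only [Matrix.mul_assoc] using this

/-- Every Pauli operator is a shift by some `b` weighted by an entrywise nonzero function `e`
whose quotients `e(c) / e(c + e_i)` do not depend on `c`. -/
lemma pauliN_form {p n : ℕ} [NeZero p] {P : Matrix (Fin n → ZMod p) (Fin n → ZMod p) ℂ}
    (hP : P ∈ PauliN p n) : ∃ (b : Fin n → ZMod p) (e : (Fin n → ZMod p) → ℂ) (ζ : Fin n → ℂ),
      (∀ c, e c ≠ 0) ∧ (∀ i c, e c = ζ i * e (c + Pi.single i 1)) ∧
      ∀ r c, P r c = if r = c + b then e c else 0 := by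
  rw [PauliN, SetLike.mem_coe] at hP
  induction hP using Submonoid.closure_induction with
  | mem g hg =>
    rcases hg with (hg | ⟨i, rfl⟩) | ⟨i, rfl⟩
    · rw [Set.mem_singleton_iff] at hg
      subst hg
      refine ⟨0, fun _ => pauliPhase p, fun _ => 1, fun _ => ?_, by simp, fun r c => ?_⟩
      · intro h
        have := pauliPhase_pow p
        rw [show pauliPhase p = 0 from h, zero_pow (by have := NeZero.ne p; omega)] at this
        exact zero_ne_one this
      · simp [Matrix.one_apply]
    · exact ⟨Pi.single i 1, fun _ => 1, fun _ => 1, by simp, by simp, XmatN_apply i⟩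
    · set ω := Complex.exp (2 * Real.pi * Complex.I / p) with hω
      have hω0 : ω ≠ 0 := Complex.exp_ne_zero _
      refine ⟨0, fun c => ω ^ (c i).val, fun j => if j = i then ω⁻¹ else 1,
        fun c => pow_ne_zero _ hω0, fun j c => ?_, fun r c => ?_⟩
      · by_cases hj : j = i
        · subst hj
          have h1 : ω ^ (c j + 1).val = ω ^ ((c j).val + 1) := by
            have hmod : ∀ k : ℕ, ω ^ (k % p) = ω ^ k := fun k => by
              conv_rhs => rw [← Nat.mod_add_div k p, pow_add, pow_mul, exp_pow_self, one_pow,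
                mul_one]
            rw [ZMod.val_add, hmod, pow_add, pow_add, ZMod.val_one_eq_one_mod, hmod]
          simp only [Pi.add_apply, Pi.single_eq_same, if_true]
          rw [h1, pow_succ]
          field_simp
        · simp [hj, Ne.symm hj]
      · rw [ZmatN_eq_diagonal, Matrix.diagonal_apply, add_zero]
        split_ifs with h
        · rw [h]
        · rfl
  | one => exact ⟨0, fun _ => 1, fun _ => 1, by simp, by simp, fun r c => by simp [Matrix.one_apply]⟩
  | mul x y _ _ hx hy =>
    obtain ⟨b, e, ζ, h0, h1, h2⟩ := hx
    obtain ⟨b', e', ζ', h0', h1', h2'⟩ := hy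
    refine ⟨b' + b, fun c => e (c + b') * e' c, fun i => ζ i * ζ' i,
      fun c => mul_ne_zero (h0 _) (h0' _), fun i c => ?_, fun r c => ?_⟩
    · simp only []
      rw [h1 i, h1' i c, add_right_comm]
      ring
    · rw [Matrix.mul_apply]
      simp only [h2, h2', mul_ite, mul_zero, Finset.sum_ite_eq', Finset.mem_univ, if_true,
        add_assoc, ite_mul, zero_mul]

/-- A diagonal gate in `C^1` has constant first quotients, hence degree at most one. -/
lemma diagonal_level_one {p n : ℕ} [NeZero p] (u : (Fin n → ZMod p) → Circle)
    (hu : Matrix.diagonal (fun x => (u x : ℂ)) ∈ CliffN p n 1) :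
    ∀ z ∈ augIdeal p n ^ 2, evalHom u z = 0 := by
  obtain ⟨φ, P, hP, hUP⟩ := hu
  obtain ⟨b, e, ζ, h0, h1, h2⟩ := pauliN_form hP
  have hval : ∀ r c, Matrix.diagonal (fun x => (u x : ℂ)) r c =
      Complex.exp (φ * Complex.I) * if r = c + b then e c else 0 := fun r c => by
    rw [hUP, Matrix.smul_apply, h2, smul_eq_mul]
  -- a nonzero shift would put a nonzero entry off the diagonal
  have hb : b = 0 := by
    by_contra hb
    have := hval (0 + b) 0
    rw [Matrix.diagonal_apply_ne _ (by simpa using hb), if_pos rfl] at this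
    exact mul_ne_zero (Complex.exp_ne_zero _) (h0 0) this.symm
  have hu : ∀ c, (u c : ℂ) = Complex.exp (φ * Complex.I) * e c := fun c => by
    have := hval c c
    rwa [Matrix.diagonal_apply_eq, hb, add_zero, if_pos rfl] at this
  have hd : ∀ i c, ((u c / u (c + Pi.single i 1) : Circle) : ℂ) = ζ i := fun i c => by
    rw [Circle.coe_div, hu, hu, h1 i c]
    have := h0 (c + Pi.single i 1)
    have := Complex.exp_ne_zero (φ * Complex.I)
    field_simp
  refine evalHom_vanish_succ u 1 fun i => evalHom_vanish_succ _ 0 fun j z hz => ?_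
  have : (fun x => u x / u (x + Pi.single i 1) /
      (u (x + Pi.single j 1) / u (x + Pi.single j 1 + Pi.single i 1))) = fun _ => 1 := by
    ext x
    rw [Circle.coe_div, hd, hd]
    have : ζ i ≠ 0 := by rw [← hd i x]; exact Circle.coe_ne_zero _
    simp [this]
  rw [this]
  clear hz
  induction z using AddMonoidAlgebra.induction_linear with
  | zero => simp
  | add f g hf hg => rw [map_add, hf, hg, add_zero]
  | single x c => rw [evalHom_single]; simp

lemma conj_shift_mul_shift {p n : ℕ} [NeZero p] (u : (Fin n → ZMod p) → Circle) (i : Fin n) :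
    Matrix.diagonal (fun x => (u x : ℂ)) * (XmatN p n i)ᴴ *
      (Matrix.diagonal (fun x => (u x : ℂ)))ᴴ * XmatN p n i =
      Matrix.diagonal fun x => ((u x / u (x + Pi.single i 1) : Circle) : ℂ) := by
  ext r c
  rw [Matrix.mul_apply]
  simp only [Matrix.diagonal_conjTranspose, Matrix.mul_diagonal, Matrix.diagonal_mul,
    Matrix.conjTranspose_apply, XmatN_apply, Matrix.diagonal_apply, Pi.star_apply]
  simp only [mul_ite, mul_one, mul_zero, Finset.sum_ite_eq', Finset.mem_univ, if_true]
  by_cases h : r = c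
  · subst h
    rw [if_pos rfl, if_pos rfl, div_eq_mul_inv, Circle.coe_mul, Circle.coe_inv_eq_conj]
    simp
  · simp [h, eq_comm]

/-- A diagonal gate in `C^(k+1)` has degree at most `k + 1`. -/
lemma diagonal_vanish {p n : ℕ} [NeZero p] (k : ℕ) (u : (Fin n → ZMod p) → Circle)
    (hu : Matrix.diagonal (fun x => (u x : ℂ)) ∈ CliffN p n (k + 1)) :
    ∀ z ∈ augIdeal p n ^ (k + 2), evalHom u z = 0 := by
  induction k generalizing u with
  | zero => exact diagonal_level_one u hu
  | succ k ih =>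
    refine evalHom_vanish_succ u (k + 2) fun i => ih _ ?_
    have hX : XmatN p n i ∈ PauliN p n :=
      Submonoid.subset_closure (Or.inl (Or.inr (Set.mem_range_self i)))
    rw [← conj_shift_mul_shift]
    exact cliffN_mul_pauli k (hu.2 _ (pauliN_star hX)) hX

lemma cliffDN_eq_diagonal {p n w : ℕ} [NeZero p] (hw : 1 ≤ w)
    {U : Matrix (Fin n → ZMod p) (Fin n → ZMod p) ℂ} (hU : U ∈ CliffDN p n w) :
    ∃ u : (Fin n → ZMod p) → Circle, U = Matrix.diagonal (fun x => (u x : ℂ)) ∧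
      ∀ z ∈ augIdeal p n ^ (w + 1), evalHom u z = 0 := by
  obtain ⟨k, rfl⟩ : ∃ k, w = k + 1 := ⟨w - 1, by omega⟩
  obtain ⟨hC, hd⟩ := hU
  have hd' := hd.diagonal_diag
  have h1 := (Matrix.mem_unitaryGroup_iff').1 (cliffN_unitary k hC)
  have hn : ∀ x, ‖U x x‖ = 1 := fun x => by
    have h2 := congrFun (congrFun h1 x) x
    rw [← hd', Matrix.star_eq_conjTranspose, Matrix.diagonal_conjTranspose,
      Matrix.diagonal_mul_diagonal, Matrix.diagonal_apply_eq, Matrix.one_apply_eq] at h2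
    have h3 : (‖U x x‖ : ℂ) ^ 2 = 1 := by rw [← Complex.conj_mul']; exact h2
    have h4 : ‖U x x‖ ^ 2 = 1 := by exact_mod_cast h3
    exact (pow_eq_one_iff_of_nonneg (norm_nonneg _) two_ne_zero).1 h4
  let u : (Fin n → ZMod p) → Circle := fun x => ⟨U x x, mem_sphere_zero_iff_norm.2 (hn x)⟩
  have hu : U = Matrix.diagonal (fun x => (u x : ℂ)) := hd'.symm
  exact ⟨u, hu, diagonal_vanish k u (hu ▸ hC)⟩

/-! ### The groups `D_{m,a}` and `D_w` -/

lemma smul_one_mem_DgrpN {p n : ℕ} [NeZero p] (m : ℕ) (a : Fin n → ℕ) (φ : ℝ) :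
    Complex.exp (φ * Complex.I) • (1 : Matrix (Fin n → ZMod p) (Fin n → ZMod p) ℂ) ∈
      DgrpN p n m a := by
  cases m with
  | zero => rw [DgrpN]; exact ⟨φ, rfl⟩
  | succ m =>
    rw [DgrpN]
    exact ⟨1, one_mem _, φ, 1, one_mem _, 1, one_mem _, by simp⟩

lemma UmaN_mem_DgrpN {p n : ℕ} [NeZero p] (m : ℕ) (a : Fin n → ℕ) :
    UmaN p n (m + 1) a ∈ DgrpN p n (m + 1) a := by
  rw [DgrpN]
  exact ⟨_, Submonoid.subset_closure rfl, 0, 1, one_mem _, 1, one_mem _, by simp⟩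

lemma DgrpN_subset_of_le {p n : ℕ} [NeZero p] (m : ℕ) {a b : Fin n → ℕ} (h : b ≤ a) :
    DgrpN p n (m + 1) b ⊆ DgrpN p n (m + 1) a := by
  rcases eq_or_ne b a with rfl | hne
  · exact subset_rfl
  · intro W hW
    have hlt : ∑ i, b i < ∑ i, a i := by
      obtain ⟨i, hi⟩ := Function.ne_iff.1 hne
      exact Finset.sum_lt_sum (fun j _ => h j) ⟨i, Finset.mem_univ i, lt_of_le_of_ne (h i) hi⟩
    rw [DgrpN]
    refine ⟨1, one_mem _, 0, W, Submonoid.subset_closure ?_, 1, one_mem _, by simp⟩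
    exact Set.mem_biUnion (show b ∈ {b : Fin n → ℕ | _} from ⟨h, hlt⟩) hW

lemma DgrpN_subset_succ {p n : ℕ} [NeZero p] (m : ℕ) {a c : Fin n → ℕ}
    (hc : ∀ i, 1 ≤ c i ∧ c i ≤ p - 1) (h : ∑ i, c i ≤ ∑ i, a i + (p - 1)) :
    DgrpN p n m c ⊆ DgrpN p n (m + 1) a := by
  intro W hW
  rw [DgrpN]
  refine ⟨1, one_mem _, 0, 1, one_mem _, W, Submonoid.subset_closure ?_, by simp⟩
  exact Set.mem_biUnion (show c ∈ {c : Fin n → ℕ | _} from ⟨hc, h⟩) hW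

/-- A vector `b` in the box `[0, q]^n` can be enlarged inside the box to any weight `s ≤ n q`. -/
lemma exists_exponent_ge {n q : ℕ} (b : Fin n → ℕ) (hb : ∀ i, b i ≤ q) (s : ℕ)
    (h1 : ∑ i, b i ≤ s) (h2 : s ≤ n * q) :
    ∃ a : Fin n → ℕ, b ≤ a ∧ (∀ i, a i ≤ q) ∧ ∑ i, a i = s := by
  induction s, h1 using Nat.le_induction with
  | base => exact ⟨b, le_rfl, hb, rfl⟩
  | succ s _ ih =>
    obtain ⟨a, ha, haq, hs⟩ := ih (by omega)
    obtain ⟨i, hi⟩ : ∃ i, a i < q := by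
      by_contra! hcon
      have := Finset.sum_le_sum fun i (_ : i ∈ Finset.univ) => hcon i
      simp at this
      omega
    refine ⟨a + Pi.single i 1, fun j => (ha j).trans (by simp), fun j => ?_, ?_⟩
    · by_cases hj : j = i
      · subst hj; simpa using hi
      · simpa [hj] using haq j
    · simp [Finset.sum_add_distrib, hs]

/-- Every `D_{t+1,b}` of weight at most `w` is contained in some factor `D_{m,a}` of `D_w`. -/
lemma exists_mem_Sw {p n w : ℕ} [NeZero p] (hp : p.Prime) (hn : 1 ≤ n) (t : ℕ) (b : Fin n → ℕ)
    (hb : ∀ i, b i ≤ p - 1) (h : (p - 1) * t + ∑ i, b i ≤ w) :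
    ∃ x ∈ Sw p n w, DgrpN p n (t + 1) b ⊆ DgrpN p n x.1 x.2 := by
  have hq : 1 ≤ p - 1 := by have := hp.two_le; omega
  set q := p - 1 with hqdef
  by_cases hcase : w ≤ q * t + n * q
  · obtain ⟨a, hba, haq, has⟩ := exists_exponent_ge b hb (w - q * t) (by omega) (by omega)
    refine ⟨(t + 1, a), ⟨by simp, haq, ?_⟩, DgrpN_subset_of_le t hba⟩
    simp only [Nat.add_sub_cancel, has, ← hqdef]
    omega
  · -- No vector of weight `w - q t` fits into the box: choose the least `k` with
    -- `w - q (t + k + 1) ≤ n q`, so that `(q, …, q)` is an admissible `c` for `D_{t+k+2,a}`.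
    push Not at hcase
    have key : ∃ k, w ≤ q * (t + k + 1) + n * q ∧ q * (t + k) + n * q < w := by
      have hex : ∃ k, w ≤ q * (t + k + 1) + n * q := ⟨w, by nlinarith⟩
      refine ⟨Nat.find hex, Nat.find_spec hex, ?_⟩
      rcases Nat.eq_zero_or_pos (Nat.find hex) with h0 | h0
      · rw [h0]; simpa using hcase
      · have := Nat.find_min hex (m := Nat.find hex - 1) (by omega)
        rw [show t + (Nat.find hex - 1) + 1 = t + Nat.find hex by omega] at this
        omega
    obtain ⟨k, hk1, hk2⟩ := key
    have hnq : q ≤ n * q := Nat.le_mul_of_pos_left q hn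
    have hexp : q * (t + k + 1) = q * (t + k) + q := by ring
    obtain ⟨a, -, haq, has⟩ := exists_exponent_ge (n := n) (q := q) 0 (by simp)
      (w - q * (t + k + 1)) (by simp) (by omega)
    refine ⟨(t + k + 2, a), ⟨by simp, haq, ?_⟩, ?_⟩
    · simp only [show t + k + 2 - 1 = t + k + 1 by omega, has, ← hqdef]
      omega
    · have hC : ∀ i : Fin n, 1 ≤ (fun _ : Fin n => q) i ∧ (fun _ : Fin n => q) i ≤ p - 1 :=
        fun i => ⟨hq, le_rfl⟩
      have hmono : ∀ k, DgrpN p n (t + 1) (fun _ => q) ⊆ DgrpN p n (t + k + 1) (fun _ => q) := by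
        intro k
        induction k with
        | zero => exact subset_rfl
        | succ k ih => exact ih.trans (DgrpN_subset_succ _ hC (by omega))
      refine (DgrpN_subset_of_le t (a := fun _ => q) hb).trans ((hmono k).trans ?_)
      refine DgrpN_subset_succ _ hC ?_
      simp only [has, Finset.sum_const, Finset.card_univ, Fintype.card_fin, smul_eq_mul, ← hqdef]
      omega

lemma one_mem_Dw {p n w : ℕ} [NeZero p] :
    (1 : Matrix (Fin n → ZMod p) (Fin n → ZMod p) ℂ) ∈ Dw p n w :=
  Submonoid.one_mem _

lemma mul_mem_Dw {p n w : ℕ} [NeZero p] {A B : Matrix (Fin n → ZMod p) (Fin n → ZMod p) ℂ}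
    (hA : A ∈ Dw p n w) (hB : B ∈ Dw p n w) : A * B ∈ Dw p n w :=
  Submonoid.mul_mem _ hA hB

lemma UmaN_mem_Dw {p n w : ℕ} [NeZero p] (hp : p.Prime) (hn : 1 ≤ n) (t : ℕ) (b : Fin n → ℕ)
    (hb : ∀ i, b i ≤ p - 1) (h : (p - 1) * t + ∑ i, b i ≤ w) :
    UmaN p n (t + 1) b ∈ Dw p n w := by
  obtain ⟨x, hx, hsub⟩ := exists_mem_Sw hp hn t b hb h
  exact Submonoid.subset_closure (Set.mem_biUnion hx (hsub (UmaN_mem_DgrpN t b)))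

lemma circle_smul_one_mem_Dw {p n w : ℕ} [NeZero p] (hp : p.Prime) (hn : 1 ≤ n) (z : Circle) :
    (z : ℂ) • (1 : Matrix (Fin n → ZMod p) (Fin n → ZMod p) ℂ) ∈ Dw p n w := by
  obtain ⟨x, hx, -⟩ := exists_mem_Sw (w := w) hp hn 0 0 (by simp) (by simp)
  obtain ⟨φ, rfl⟩ := Circle.exp_surjective z
  rw [Circle.coe_exp]
  exact Submonoid.subset_closure (Set.mem_biUnion hx (smul_one_mem_DgrpN x.1 x.2 φ))

lemma UmaN_eq_diagonal {p n : ℕ} [NeZero p] (m : ℕ) (b : Fin n → ℕ) :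
    UmaN p n m b = Matrix.diagonal fun x =>
      Complex.exp (2 * Real.pi * Complex.I / (p ^ m : ℕ)) ^ ∏ i, (x i).val ^ b i := by
  ext r c
  rw [UmaN, Matrix.of_apply, Matrix.diagonal_apply]
  split_ifs with h
  · rw [← Complex.exp_nat_mul]
    congr 1
    push_cast
    ring
  · rfl

lemma zpow_eq_pow_of_modEq {z : ℂ} (hz : z ≠ 0) {N : ℕ} (h : z ^ N = 1) {a b : ℤ}
    (hab : a ≡ b [ZMOD N]) : z ^ a = z ^ b := by
  obtain ⟨c, hc⟩ := hab.dvd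
  rw [show b = a + N * c by linarith, zpow_add₀ hz, _root_.zpow_mul, zpow_natCast, h, _root_.one_zpow, mul_one]

/-- Integer powers of `U_{t+1,b}` lie in `D_w`: the gate has finite order, so natural powers
suffice. -/
lemma UmaN_zpow_mem_Dw {p n w : ℕ} [NeZero p] (hp : p.Prime) (hn : 1 ≤ n) (t : ℕ)
    (b : Fin n → ℕ) (hb : ∀ i, b i ≤ p - 1) (h : (p - 1) * t + ∑ i, b i ≤ w) (c : ℤ) :
    (Matrix.diagonal fun x : Fin n → ZMod p =>
      Complex.exp (2 * Real.pi * Complex.I / (p ^ (t + 1) : ℕ)) ^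
        (c * ((∏ i, (x i).val ^ b i : ℕ) : ℤ))) ∈ Dw p n w := by
  set N := p ^ (t + 1) with hN
  have hN0 : N ≠ 0 := pow_ne_zero _ hp.ne_zero
  set ζ := Complex.exp (2 * Real.pi * Complex.I / (N : ℕ)) with hζ
  have hζ1 : ζ ^ N = 1 := (Complex.isPrimitiveRoot_exp N hN0).pow_eq_one
  obtain ⟨k, hk⟩ : ∃ k : ℕ, c ≡ k [ZMOD N] :=
    ⟨(c % N).toNat, by
      rw [Int.toNat_of_nonneg (Int.emod_nonneg _ (by exact_mod_cast hN0))]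
      exact (Int.mod_modEq c N).symm⟩
  have hmem : UmaN p n (t + 1) b ^ k ∈ Dw p n w :=
    Submonoid.pow_mem _ (UmaN_mem_Dw hp hn t b hb h) k
  convert hmem using 1
  rw [UmaN_eq_diagonal, Matrix.diagonal_pow]
  congr 1
  ext x
  rw [zpow_eq_pow_of_modEq (Complex.exp_ne_zero _) hζ1 (hk.mul_right _), Pi.pow_apply, ← hN, ← hζ,
    ← pow_mul, ← Nat.cast_mul, zpow_natCast, mul_comm]

lemma diagonal_prod_mem_Dw {p n w : ℕ} [NeZero p] {ι : Type*} (s : Finset ι)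
    (f : ι → (Fin n → ZMod p) → ℂ) (h : ∀ a ∈ s, Matrix.diagonal (f a) ∈ Dw p n w) :
    Matrix.diagonal (fun x => ∏ a ∈ s, f a x) ∈ Dw p n w := by
  classical
  induction s using Finset.induction_on with
  | empty => simpa using one_mem_Dw
  | insert a s ha ih =>
    have := mul_mem_Dw (h a (Finset.mem_insert_self a s))
      (ih fun b hb => h b (Finset.mem_insert_of_mem hb))
    rw [Matrix.diagonal_mul_diagonal] at this
    simpa only [Finset.prod_insert ha] using this

/-- A product of falling factorials is an integral combination of monomials `x^b` with `b ≤ a`. -/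
lemma prod_descFactorial_eq {n : ℕ} (a : Fin n → ℕ) :
    ∃ κ : (Fin n → ℕ) → ℤ, ∀ x : Fin n → ℕ, ((∏ i, (x i).descFactorial (a i) : ℕ) : ℤ) =
      ∑ b ∈ Fintype.piFinset fun i => Finset.range (a i + 1),
        κ b * ((∏ i, x i ^ b i : ℕ) : ℤ) := by
  refine ⟨fun b => ∏ i, (descPochhammer ℤ (a i)).coeff (b i), fun x => ?_⟩
  have h1 : ∀ i, (((x i).descFactorial (a i) : ℕ) : ℤ) = ∑ k ∈ Finset.range (a i + 1),
      (descPochhammer ℤ (a i)).coeff k * ((x i ^ k : ℕ) : ℤ) := fun i => by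
    rw [← descPochhammer_eval_eq_descFactorial, Polynomial.eval_eq_sum_range,
      descPochhammer_natDegree]
    simp
  rw [Nat.cast_prod, Finset.prod_congr rfl fun i _ => h1 i, Finset.prod_univ_sum]
  exact Finset.sum_congr rfl fun b _ => by rw [Finset.prod_mul_distrib]; push_cast; rfl

/-- Newton terms `z ^ ∏ binom(x i, a i)` of weight at most `w` lie in `D_w`.  The factor
`∏ (a i)!` relating binomial coefficients to falling factorials is inverted modulo
`p^(t+1)`, a multiple of the order of `z`. -/
lemma newton_term_mem_Dw {p n w : ℕ} [NeZero p] (hp : p.Prime) (hn : 1 ≤ n) (t : ℕ)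
    (a : Fin n → ℕ) (ha : ∀ i, a i ≤ p - 1) (h : (p - 1) * t + ∑ i, a i ≤ w) (z : ℂ)
    (hz : z ^ p ^ (t + 1) = 1) :
    (Matrix.diagonal fun x : Fin n → ZMod p => z ^ ∏ i, (x i).val.choose (a i)) ∈ Dw p n w := by
  set N := p ^ (t + 1) with hN
  have hN0 : N ≠ 0 := pow_ne_zero _ hp.ne_zero
  have : NeZero N := ⟨hN0⟩
  set ζ := Complex.exp (2 * Real.pi * Complex.I / (N : ℕ)) with hζ
  have hprim : IsPrimitiveRoot ζ N := Complex.isPrimitiveRoot_exp N hN0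
  obtain ⟨k, -, hk⟩ := hprim.eq_pow_of_pow_eq_one hz
  set Q := ∏ i, (a i).factorial with hQ
  have hcop : IsCoprime (Q : ℤ) (N : ℤ) := by
    rw [Nat.isCoprime_iff_coprime]
    refine Nat.Coprime.pow_right _ (Nat.Coprime.prod_left fun i _ => ?_)
    refine (hp.coprime_iff_not_dvd.2 fun hd => ?_).symm
    have := hp.dvd_factorial.1 hd
    have := ha i
    have := hp.pos
    omega
  obtain ⟨v, v', hv⟩ := hcop
  obtain ⟨κ, hκ⟩ := prod_descFactorial_eq a
  have hfun : (fun x : Fin n → ZMod p => z ^ ∏ i, (x i).val.choose (a i)) = fun x =>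
      ∏ b ∈ Fintype.piFinset fun i => Finset.range (a i + 1),
        ζ ^ ((k * v * κ b) * ((∏ i, (x i).val ^ b i : ℕ) : ℤ)) := by
    ext x
    have hζ0 : ζ ≠ 0 := Complex.exp_ne_zero _
    have hdesc : ((∏ i, (x i).val.descFactorial (a i) : ℕ) : ℤ) =
        Q * ((∏ i, (x i).val.choose (a i) : ℕ) : ℤ) := by
      rw [hQ, ← Nat.cast_mul, ← Finset.prod_mul_distrib]
      exact congrArg _ (Finset.prod_congr rfl fun i _ => Nat.descFactorial_eq_factorial_mul_choose _ _)
    have hsum : ∏ b ∈ Fintype.piFinset fun i => Finset.range (a i + 1),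
        ζ ^ ((k * v * κ b) * ((∏ i, (x i).val ^ b i : ℕ) : ℤ)) =
        ζ ^ (k * v * ((∏ i, (x i).val.descFactorial (a i) : ℕ) : ℤ)) := by
      rw [hκ fun i => (x i).val, Finset.mul_sum]
      induction (Fintype.piFinset fun i => Finset.range (a i + 1)) using Finset.induction_on with
      | empty => simp
      | insert b s hb ih =>
        rw [Finset.prod_insert hb, Finset.sum_insert hb, zpow_add₀ hζ0, ih, mul_assoc (k * v : ℤ)]
    rw [hsum, hdesc, ← hk, ← pow_mul, ← zpow_natCast]
    refine zpow_eq_pow_of_modEq hζ0 hprim.pow_eq_one (Int.modEq_iff_dvd.2 ?_)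
    refine ⟨- (k * v' * ((∏ i, (x i).val.choose (a i) : ℕ) : ℤ)), ?_⟩
    push_cast
    linear_combination (k * (∏ i, ((x i).val.choose (a i) : ℤ))) * hv
  rw [hfun]
  refine diagonal_prod_mem_Dw _ _ fun b hb => ?_
  have hba : ∀ i, b i ≤ a i := fun i =>
    Nat.lt_succ_iff.1 (Finset.mem_range.1 (Fintype.mem_piFinset.1 hb i))
  refine UmaN_zpow_mem_Dw hp hn t b (fun i => (hba i).trans (ha i)) ?_ _
  exact (Nat.add_le_add_left (Finset.sum_le_sum fun i _ => hba i) _).trans h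

/-- For `n` qudits of prime dimension `p` and every `w ≥ 1`, the set
`C^w_d` of diagonal gates in the `w`-th level of the Clifford hierarchy is contained in
the group `D_w`. -/
theorem diagonal_clifford_subset_Dw (p n w : ℕ) [NeZero p] (hp : p.Prime) (hn : 1 ≤ n)
    (hw : 1 ≤ w) :
    CliffDN p n w ⊆ Dw p n w := by
  intro U hU
  obtain ⟨u, rfl, hvan⟩ := cliffDN_eq_diagonal hw hU
  obtain ⟨θ, hθ, hu⟩ := newton_circle hp u w hvan
  have hfun : (fun x => (u x : ℂ)) = fun x =>
      ∏ a ∈ Fintype.piFinset fun _ : Fin n => Finset.range p,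
        (θ a : ℂ) ^ ∏ i, (x i).val.choose (a i) := by
    ext x
    rw [hu x]
    exact (map_prod Circle.coeHom _ _).trans
      (Finset.prod_congr rfl fun a _ => Circle.coe_pow _ _)
  rw [hfun]
  refine diagonal_prod_mem_Dw _ _ fun a ha => ?_
  have hap : ∀ i, a i ≤ p - 1 := fun i => by
    have := Finset.mem_range.1 (Fintype.mem_piFinset.1 ha i)
    omega
  rcases eq_or_ne a 0 with rfl | ha0
  · convert circle_smul_one_mem_Dw (w := w) hp hn (θ 0) using 1
    simp [Matrix.smul_one_eq_diagonal]
  · rcases lt_or_ge w (∑ i, a i) with hlt | hle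
    · have h1 : θ a = 1 := by simpa using hθ a ha0 0 (by omega)
      simpa [h1] using one_mem_Dw
    · -- `t + 1` is the least exponent for which the order bound of `hθ` applies
      have hq : 0 < p - 1 := by have := hp.two_le; omega
      set t := (w - ∑ i, a i) / (p - 1) with ht
      have h1 : (p - 1) * t ≤ w - ∑ i, a i := Nat.mul_div_le _ _
      have h2 : w - ∑ i, a i < (p - 1) * (t + 1) := Nat.lt_mul_div_succ _ hq
      have h3 := hθ a ha0 (t + 1) (by rw [mul_comm (t + 1)]; omega)
      exact newton_term_mem_Dw hp hn t a hap (by omega) _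
        (by rw [← Circle.coe_pow, h3, Circle.coe_one])
end
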